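/- arXiv:1305.0526 — 10 statements merged into one kernel-verified Lean document; each statement's English description precedes it below -/
import Mathlib

section
/- For every ε, δ ∈ (0,1] there exist a positive integer k with k ≤ C·(log(1/(εδ)) + 1)^3 for an absolute constant C, and positive real numbers w_1,…,w_k and t_1,…,t_k (each at most a polynomial in 1/(δε)), such that for all x ∈ [δ,1]: (1−ε)·x⁻¹ ≤ Σ_{j=1}^k w_j·e^{−t_j·x} ≤ (1+ε)·x⁻¹. -/
/-!
Start from `x⁻¹ = ∫ t in 0..∞, exp (-t * x)`. For `x ∈ [δ, 1]` the range of integration can be cut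
down to `[a, 2 ^ M * a]` with `a = ε / 4` and `2 ^ M` of order `(ε * δ)⁻²`, at a relative cost of
`O(ε)`. By Tchakaloff's theorem (an average of a continuous function over a compact set is a convex
combination of few of its values, by Carathéodory) each of the `M` dyadic intervals `[u, 2 * u]` has
a quadrature rule with at most `N + 1` nodes and positive weights that is exact on polynomials of
degree less than `N`. On such an interval the Taylor polynomial of `exp (-t * x)` at the midpoint
has error at most `(u * x) ^ N / N! / 2 ^ N * exp (-(u * x))`, and `s ^ (N + 1) / (N + 1)! ≤ exp s`
turns this into a relative quadrature error of `O(N / 2 ^ N)`, uniformly in `u` and `x`. Taking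
`N = 3 * M` makes the total error `O(ε)` with `O(M ^ 2)` nodes.
-/

open Finset MeasureTheory Module Polynomial
open scoped Nat

section Caratheodory

variable {𝕜 E : Type*} [Field 𝕜] [LinearOrder 𝕜] [IsStrictOrderedRing 𝕜] [AddCommGroup E]
  [Module 𝕜 E] [FiniteDimensional 𝕜 E]

theorem exists_fin_pos_sum_smul_eq_of_mem_convexHull {s : Set E} {x : E}
    (hx : x ∈ convexHull 𝕜 s) :
    ∃ (n : ℕ) (w : Fin n → 𝕜) (z : Fin n → E), n ≤ finrank 𝕜 E + 1 ∧
      (∀ j, 0 < w j) ∧ (∀ j, z j ∈ s) ∧ ∑ j, w j = 1 ∧ ∑ j, w j • z j = x := by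
  obtain ⟨ι, _, z, w, hz, hind, hw, hw_sum, hwz⟩ := eq_pos_convex_span_of_mem_convexHull hx
  have hcard : Fintype.card ι ≤ finrank 𝕜 E + 1 :=
    hind.card_le_finrank_succ.trans (by gcongr; exact Submodule.finrank_le _)
  let e := Fintype.equivFin ι
  refine ⟨Fintype.card ι, w ∘ e.symm, z ∘ e.symm, hcard, fun j ↦ hw _,
    fun j ↦ hz ⟨_, rfl⟩, ?_, ?_⟩
  · rw [← hw_sum]
    exact e.symm.sum_comp w
  · rw [← hwz]
    exact e.symm.sum_comp fun i ↦ w i • z i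

theorem exists_mem_stdSimplex_sum_smul_eq_of_mem_convexHull {s : Set E} {x : E}
    (hx : x ∈ convexHull 𝕜 s) :
    ∃ w ∈ stdSimplex 𝕜 (Fin (finrank 𝕜 E + 1)), ∃ z : Fin (finrank 𝕜 E + 1) → E,
      (∀ i, z i ∈ s) ∧ ∑ i, w i • z i = x := by
  obtain ⟨y, hy⟩ : s.Nonempty := convexHull_nonempty_iff.1 ⟨x, hx⟩
  obtain ⟨n, w, z, hn, hw, hz, hw_sum, hwz⟩ := exists_fin_pos_sum_smul_eq_of_mem_convexHull hx
  have hinj := Fin.castLE_injective hn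
  let w' : Fin (finrank 𝕜 E + 1) → 𝕜 := Function.extend (Fin.castLE hn) w fun _ ↦ 0
  let z' : Fin (finrank 𝕜 E + 1) → E := Function.extend (Fin.castLE hn) z fun _ ↦ y
  have hw'_apply (j) : w' (Fin.castLE hn j) = w j := hinj.extend_apply w _ j
  have hz'_apply (j) : z' (Fin.castLE hn j) = z j := hinj.extend_apply z _ j
  have hw'_zero (i) (hi : i ∉ Set.range (Fin.castLE hn)) : w' i = 0 :=
    Function.extend_apply' w _ i hi
  have hw'_nonneg (i) : 0 ≤ w' i := by
    by_cases hi : i ∈ Set.range (Fin.castLE hn)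
    · obtain ⟨j, rfl⟩ := hi
      exact hw'_apply j ▸ (hw j).le
    · exact (hw'_zero i hi).ge
  have hz'_mem (i) : z' i ∈ s := by
    by_cases hi : i ∈ Set.range (Fin.castLE hn)
    · obtain ⟨j, rfl⟩ := hi
      exact hz'_apply j ▸ hz j
    · rwa [show z' i = y from Function.extend_apply' z _ i hi]
  refine ⟨w', ⟨hw'_nonneg, ?_⟩, z', hz'_mem, ?_⟩
  · rw [← hw_sum]
    exact (Fintype.sum_of_injective _ hinj w w' hw'_zero fun j ↦ (hw'_apply j).symm).symm
  · rw [← hwz]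
    exact (Fintype.sum_of_injective _ hinj _ _ (fun i hi ↦ by rw [hw'_zero i hi, zero_smul])
      fun j ↦ by rw [hw'_apply, hz'_apply]).symm

theorem convexHull_eq_image_stdSimplex_prod (s : Set E) :
    convexHull 𝕜 s =
      (fun p : (Fin (finrank 𝕜 E + 1) → 𝕜) × (Fin (finrank 𝕜 E + 1) → E) ↦ ∑ i, p.1 i • p.2 i) ''
        (stdSimplex 𝕜 (Fin (finrank 𝕜 E + 1)) ×ˢ Set.univ.pi fun _ ↦ s) := by
  apply Set.Subset.antisymm
  · intro x hx
    obtain ⟨w, hw, z, hz, hwz⟩ := exists_mem_stdSimplex_sum_smul_eq_of_mem_convexHull hx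
    exact ⟨(w, z), ⟨hw, fun i _ ↦ hz i⟩, hwz⟩
  · rintro _ ⟨⟨w, z⟩, ⟨⟨hw, hw_sum⟩, hz⟩, rfl⟩
    exact (convex_convexHull 𝕜 s).sum_mem (fun i _ ↦ hw i) hw_sum
      fun i _ ↦ subset_convexHull 𝕜 s (hz i trivial)

end Caratheodory

theorem isCompact_convexHull {E : Type*} [AddCommGroup E] [Module ℝ E] [FiniteDimensional ℝ E]
    [TopologicalSpace E] [ContinuousAdd E] [ContinuousSMul ℝ E] {s : Set E} (hs : IsCompact s) :
    IsCompact (convexHull ℝ s) := by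
  rw [convexHull_eq_image_stdSimplex_prod]
  exact ((isCompact_stdSimplex ℝ _).prod (isCompact_univ_pi fun _ ↦ hs)).image (by fun_prop)

theorem exists_pos_sum_smul_eq_setIntegral {X : Type*} [TopologicalSpace X] [MeasurableSpace X]
    [OpensMeasurableSpace X] {E : Type*} [NormedAddCommGroup E] [NormedSpace ℝ E]
    [FiniteDimensional ℝ E] {μ : Measure X} [IsFiniteMeasureOnCompacts μ] {K : Set X}
    (hK : IsCompact K) (hK_meas : MeasurableSet K) (hμK : μ K ≠ 0) {f : X → E}
    (hf : ContinuousOn f K) :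
    ∃ (n : ℕ) (w : Fin n → ℝ) (p : Fin n → X), n ≤ finrank ℝ E + 1 ∧
      (∀ j, 0 < w j) ∧ (∀ j, p j ∈ K) ∧ ∑ j, w j = μ.real K ∧
      ∑ j, w j • f (p j) = ∫ x in K, f x ∂μ := by
  have hmass : 0 < μ.real K := ENNReal.toReal_pos hμK hK.measure_ne_top
  have haverage : ⨍ x in K, f x ∂μ ∈ convexHull ℝ (f '' K) :=
    (convex_convexHull ℝ _).set_average_mem
      (isCompact_convexHull (hK.image_of_continuousOn hf)).isClosed hμK hK.measure_ne_top
      ((ae_restrict_mem hK_meas).mono fun x hx ↦ subset_convexHull ℝ _ ⟨x, hx, rfl⟩)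
      (hf.integrableOn_compact' hK hK_meas)
  obtain ⟨n, w, z, hn, hw, hz, hw_sum, hwz⟩ :=
    exists_fin_pos_sum_smul_eq_of_mem_convexHull haverage
  choose p hpK hpz using hz
  refine ⟨n, fun j ↦ μ.real K * w j, p, hn, fun j ↦ mul_pos hmass (hw j), hpK, ?_, ?_⟩
  · rw [← mul_sum, hw_sum, mul_one]
  · simp only [hpz, mul_smul]
    rw [← smul_sum, hwz, setAverage_eq, smul_inv_smul₀ hmass.ne']

/-- A quadrature rule for `∫ t in a..b, f t` with finitely many nodes in `[a, b]` and positive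
weights, exact on constants. Nodes are indexed by `Fin size` and may coincide. -/
structure PositiveQuadrature (a b : ℝ) where
  size : ℕ
  weight : Fin size → ℝ
  node : Fin size → ℝ
  weight_pos : ∀ j, 0 < weight j
  node_mem : ∀ j, node j ∈ Set.Icc a b
  sum_weight : ∑ j, weight j = b - a

namespace PositiveQuadrature

variable {a b c : ℝ}

/-- The value `∑ j, w j * f (t j)` that the rule assigns to `f` in place of its integral. -/
def apply (Q : PositiveQuadrature a b) (f : ℝ → ℝ) : ℝ :=
  ∑ j, Q.weight j * f (Q.node j)

theorem weight_le (Q : PositiveQuadrature a b) (j : Fin Q.size) : Q.weight j ≤ b - a := by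
  rw [← Q.sum_weight]
  exact single_le_sum (fun i _ ↦ (Q.weight_pos i).le) (mem_univ j)

theorem size_pos (Q : PositiveQuadrature a b) (hab : a < b) : 0 < Q.size := by
  refine Nat.pos_of_ne_zero fun hsize ↦ (sub_pos.2 hab).ne ?_
  have : IsEmpty (Fin Q.size) := hsize ▸ Fin.isEmpty
  rw [← Q.sum_weight, Fintype.sum_empty]

theorem apply_sub (Q : PositiveQuadrature a b) (f g : ℝ → ℝ) :
    Q.apply (fun t ↦ f t - g t) = Q.apply f - Q.apply g := by
  simp only [apply, mul_sub, sum_sub_distrib]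

theorem abs_apply_le (Q : PositiveQuadrature a b) {f : ℝ → ℝ} {B : ℝ}
    (hf : ∀ t ∈ Set.Icc a b, |f t| ≤ B) : |Q.apply f| ≤ B * (b - a) := by
  calc |Q.apply f| ≤ ∑ j, |Q.weight j * f (Q.node j)| := abs_sum_le_sum_abs _ _
    _ ≤ ∑ j, B * Q.weight j := sum_le_sum fun j _ ↦ by
        rw [abs_mul, abs_of_pos (Q.weight_pos j), mul_comm]
        exact mul_le_mul_of_nonneg_right (hf _ (Q.node_mem j)) (Q.weight_pos j).le
    _ = B * (b - a) := by rw [← mul_sum, Q.sum_weight]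

theorem abs_apply_sub_integral_le_of_exact (Q : PositiveQuadrature a b) (hab : a ≤ b)
    {f g : ℝ → ℝ} {B : ℝ} (hf : IntervalIntegrable f volume a b)
    (hg : IntervalIntegrable g volume a b) (hQg : Q.apply g = ∫ t in a..b, g t)
    (hfg : ∀ t ∈ Set.Icc a b, |f t - g t| ≤ B) :
    |Q.apply f - ∫ t in a..b, f t| ≤ 2 * (B * (b - a)) := by
  have happly : |Q.apply f - Q.apply g| ≤ B * (b - a) := Q.apply_sub f g ▸ Q.abs_apply_le hfg
  have hintegral : |(∫ t in a..b, f t) - ∫ t in a..b, g t| ≤ B * (b - a) := by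
    rw [← intervalIntegral.integral_sub hf hg, ← abs_of_nonneg (sub_nonneg.2 hab),
      ← Real.norm_eq_abs]
    apply intervalIntegral.norm_integral_le_of_norm_le_const
    rw [Set.uIoc_of_le hab]
    exact fun t ht ↦ hfg t (Set.Ioc_subset_Icc_self ht)
  rw [← hQg] at hintegral
  calc |Q.apply f - ∫ t in a..b, f t|
      ≤ |Q.apply f - Q.apply g| + |Q.apply g - ∫ t in a..b, f t| := abs_sub_le _ _ _
    _ ≤ 2 * (B * (b - a)) := by rw [abs_sub_comm (Q.apply g)]; linarith

/-- The rule without nodes on a degenerate interval. -/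
def nil (a : ℝ) : PositiveQuadrature a a where
  size := 0
  weight := Fin.elim0
  node := Fin.elim0
  weight_pos j := j.elim0
  node_mem j := j.elim0
  sum_weight := by simp

theorem nil_apply (a : ℝ) (f : ℝ → ℝ) : (nil a).apply f = 0 :=
  Fin.sum_univ_zero _

/-- The composite rule on `[a, c]` made of a rule on `[a, b]` and one on `[b, c]`. -/
def append (Q : PositiveQuadrature a b) (R : PositiveQuadrature b c) (hab : a ≤ b) (hbc : b ≤ c) :
    PositiveQuadrature a c where
  size := Q.size + R.size
  weight := Fin.append Q.weight R.weight
  node := Fin.append Q.node R.node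
  weight_pos := Fin.addCases (fun j ↦ by simpa using Q.weight_pos j)
    fun j ↦ by simpa using R.weight_pos j
  node_mem := Fin.addCases
    (fun j ↦ by simpa using Set.Icc_subset_Icc_right hbc (Q.node_mem j))
    fun j ↦ by simpa using Set.Icc_subset_Icc_left hab (R.node_mem j)
  sum_weight := by simp [Fin.sum_univ_add, Q.sum_weight, R.sum_weight]

theorem append_apply (Q : PositiveQuadrature a b) (R : PositiveQuadrature b c) (hab : a ≤ b)
    (hbc : b ≤ c) (f : ℝ → ℝ) : (Q.append R hab hbc).apply f = Q.apply f + R.apply f := by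
  refine (Fin.sum_univ_add _).trans ?_
  simp [apply, append]

theorem exists_exact_on_degreeLT (hab : a < b) (N : ℕ) :
    ∃ Q : PositiveQuadrature a b, Q.size ≤ N + 1 ∧
      ∀ p ∈ degreeLT ℝ N, Q.apply (p.eval ·) = ∫ t in a..b, p.eval t := by
  have hvolume : volume (Set.Icc a b) ≠ 0 := by
    rw [Real.volume_Icc, ENNReal.ofReal_ne_zero_iff]
    exact sub_pos.2 hab
  obtain ⟨n, w, t, hn, hw, ht, hw_sum, hmoment⟩ := exists_pos_sum_smul_eq_setIntegral
    (μ := volume) isCompact_Icc measurableSet_Icc hvolume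
    (f := fun t (k : Fin N) ↦ t ^ (k : ℕ)) (by fun_prop)
  rw [finrank_fin_fun] at hn
  rw [Real.volume_real_Icc_of_le hab.le] at hw_sum
  have hint (k : Fin N) : IntervalIntegrable (fun t : ℝ ↦ t ^ (k : ℕ)) volume a b :=
    (continuous_pow _).intervalIntegrable a b
  have hmonomial (k : Fin N) : ∑ j, w j * t j ^ (k : ℕ) = ∫ t in a..b, t ^ (k : ℕ) := by
    have hk := congrFun hmoment k
    rw [eval_integral fun i ↦
      (intervalIntegrable_iff_integrableOn_Icc_of_le hab.le).1 (hint i)] at hk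
    rw [intervalIntegral.integral_of_le hab.le, ← integral_Icc_eq_integral_Ioc, ← hk]
    simp only [Finset.sum_apply, Pi.smul_apply, smul_eq_mul]
  refine ⟨⟨n, w, t, hw, ht, hw_sum⟩, hn, fun p hp ↦ ?_⟩
  simp only [apply, eval_eq_sum_degreeLTEquiv hp, mul_sum]
  rw [sum_comm, intervalIntegral.integral_finsetSum fun k _ ↦ (hint k).const_mul _]
  refine sum_congr rfl fun k _ ↦ ?_
  rw [intervalIntegral.integral_const_mul, ← hmonomial k, mul_sum]
  exact sum_congr rfl fun j _ ↦ mul_left_comm _ _ _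

end PositiveQuadrature

theorem abs_exp_sub_sum_range_le (x : ℝ) (n : ℕ) :
    |Real.exp x - ∑ k ∈ range n, x ^ k / k !| ≤ |x| ^ n / n ! * Real.exp |x| := by
  have hasSum_exp (y : ℝ) : HasSum (fun k : ℕ ↦ y ^ k / k !) (Real.exp y) := by
    rw [Real.exp_eq_exp_ℝ]
    exact NormedSpace.expSeries_div_hasSum_exp y
  have htail : Real.exp x - ∑ k ∈ range n, x ^ k / k ! = ∑' k : ℕ, x ^ (k + n) / (k + n)! := by
    rw [← (hasSum_exp x).tsum_eq, ← (hasSum_exp x).summable.sum_add_tsum_nat_add n,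
      add_sub_cancel_left]
  rw [htail, ← Real.norm_eq_abs]
  refine tsum_of_norm_bounded ((hasSum_exp |x|).mul_left (|x| ^ n / n !)) fun k ↦ ?_
  have hfactorial : (n ! * k ! : ℝ) ≤ (k + n)! := by
    rw [add_comm k n]
    exact_mod_cast Nat.le_of_dvd (Nat.factorial_pos _)
      (Nat.factorial_mul_factorial_dvd_factorial_add n k)
  calc ‖x ^ (k + n) / (k + n)!‖ = |x| ^ (k + n) / (k + n)! := by
        rw [norm_div, norm_pow, Real.norm_eq_abs, RCLike.norm_natCast]
    _ ≤ |x| ^ (k + n) / (n ! * k !) := by gcongr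
    _ = |x| ^ n / n ! * (|x| ^ k / k !) := by rw [div_mul_div_comm, ← pow_add, add_comm n k]

theorem exists_mem_degreeLT_abs_exp_sub_eval_le (x c : ℝ) (N : ℕ) :
    ∃ p ∈ degreeLT ℝ N, ∀ t, |Real.exp (-t * x) - p.eval t| ≤
      Real.exp (-c * x) * (|(t - c) * x| ^ N / N ! * Real.exp |(t - c) * x|) := by
  refine ⟨∑ k ∈ range N, C (Real.exp (-c * x) * ((-x) ^ k / k !)) * (X - C c) ^ k,
    Submodule.sum_mem _ fun k hk ↦ ?_, fun t ↦ ?_⟩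
  · rw [mem_degreeLT]
    calc degree (C (Real.exp (-c * x) * ((-x) ^ k / k !)) * (X - C c) ^ k)
        ≤ degree ((X - C c) ^ k) := by
          rw [← smul_eq_C_mul]
          exact degree_smul_le _ _
      _ = k := by rw [degree_pow, degree_X_sub_C, nsmul_one]
      _ < N := by exact_mod_cast mem_range.1 hk
  · have hexp : Real.exp (-t * x) = Real.exp (-c * x) * Real.exp (-((t - c) * x)) := by
      rw [← Real.exp_add]
      ring_nf
    have heval : (∑ k ∈ range N, C (Real.exp (-c * x) * ((-x) ^ k / k !)) * (X - C c) ^ k).eval t =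
        Real.exp (-c * x) * ∑ k ∈ range N, (-((t - c) * x)) ^ k / k ! := by
      rw [eval_finsetSum, mul_sum]
      refine sum_congr rfl fun k _ ↦ ?_
      simp only [eval_mul, eval_C, eval_pow, eval_sub, eval_X]
      rw [← mul_neg, mul_pow]
      ring
    rw [hexp, heval, ← mul_sub, abs_mul, Real.abs_exp, ← abs_neg ((t - c) * x)]
    gcongr
    exact abs_exp_sub_sum_range_le _ N

theorem exists_mem_degreeLT_abs_exp_sub_eval_le_on_dyadic {a x : ℝ} (ha : 0 ≤ a) (hx : 0 ≤ x)
    (N : ℕ) :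
    ∃ p ∈ degreeLT ℝ N, ∀ t ∈ Set.Icc a (2 * a),
      |Real.exp (-t * x) - p.eval t| ≤ (a * x) ^ N / N ! / 2 ^ N * Real.exp (-(a * x)) := by
  obtain ⟨p, hp, hbound⟩ := exists_mem_degreeLT_abs_exp_sub_eval_le x (3 / 2 * a) N
  refine ⟨p, hp, fun t ht ↦ (hbound t).trans ?_⟩
  have hdist : |(t - 3 / 2 * a) * x| ≤ a * x / 2 := by
    rw [abs_mul, abs_of_nonneg hx, mul_div_right_comm]
    gcongr
    rw [abs_le]
    constructor <;> linarith [ht.1, ht.2]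
  calc Real.exp (-(3 / 2 * a) * x) *
        (|(t - 3 / 2 * a) * x| ^ N / N ! * Real.exp |(t - 3 / 2 * a) * x|)
      ≤ Real.exp (-(3 / 2 * a) * x) * ((a * x / 2) ^ N / N ! * Real.exp (a * x / 2)) := by gcongr
    _ = (a * x / 2) ^ N / N ! * (Real.exp (-(3 / 2 * a) * x) * Real.exp (a * x / 2)) := by ring
    _ = (a * x) ^ N / N ! / 2 ^ N * Real.exp (-(a * x)) := by
        rw [← Real.exp_add, div_pow, div_right_comm]
        ring_nf

theorem integral_exp_neg_mul {x : ℝ} (hx : x ≠ 0) (a b : ℝ) :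
    ∫ t in a..b, Real.exp (-t * x) = (Real.exp (-a * x) - Real.exp (-b * x)) * x⁻¹ := by
  simp only [neg_mul_comm _ x]
  rw [intervalIntegral.integral_comp_mul_right Real.exp (neg_ne_zero.2 hx), integral_exp,
    smul_eq_mul, inv_neg]
  ring

theorem abs_integral_exp_neg_mul_sub_inv_le {a b x : ℝ} (ha : 0 ≤ a) (hb : 0 < b) (hx : 0 < x) :
    |(∫ t in a..b, Real.exp (-t * x)) - x⁻¹| ≤ (a * x + (b * x)⁻¹) * x⁻¹ := by
  have hnear : 1 - a * x ≤ Real.exp (-a * x) := by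
    linarith [Real.add_one_le_exp (-a * x)]
  have hnear_le : Real.exp (-a * x) ≤ 1 := Real.exp_le_one_iff.2 (by nlinarith)
  have hfar : Real.exp (-b * x) ≤ (b * x)⁻¹ := by
    rw [neg_mul, Real.exp_neg]
    gcongr
    linarith [Real.add_one_le_exp (b * x)]
  have hfar_pos := Real.exp_pos (-b * x)
  rw [integral_exp_neg_mul hx.ne', ← sub_one_mul, abs_mul, abs_of_pos (inv_pos.2 hx)]
  gcongr
  rw [abs_le]
  constructor <;> linarith [inv_pos.2 (mul_pos hb hx), mul_nonneg ha hx.le]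

theorem exists_two_pow_mem_Icc {z : ℝ} (hz : 1 ≤ z) :
    ∃ n : ℕ, (2 : ℝ) ^ n ∈ Set.Icc z (2 * z) ∧ (n : ℝ) ≤ 2 * Real.log z + 1 := by
  obtain ⟨m, hm, hm'⟩ := exists_nat_pow_near hz one_lt_two
  refine ⟨m + 1, ⟨hm'.le, by rw [pow_succ']; linarith⟩, ?_⟩
  have hlog : m * Real.log 2 ≤ Real.log z := by
    rw [← Real.log_pow]
    exact Real.log_le_log (by positivity) hm
  have hlog_two : (m : ℝ) * (1 / 2) ≤ m * Real.log 2 := by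
    gcongr
    linarith [Real.log_two_gt_d9]
  push_cast
  linarith

namespace PositiveQuadrature

theorem exists_abs_apply_exp_sub_integral_le_on_dyadic {a : ℝ} (ha : 0 < a) (N : ℕ) :
    ∃ Q : PositiveQuadrature a (2 * a), Q.size ≤ N + 1 ∧ ∀ x > 0,
      |Q.apply (fun t ↦ Real.exp (-t * x)) - ∫ t in a..2 * a, Real.exp (-t * x)| ≤
        2 * (N + 1) / 2 ^ N * x⁻¹ := by
  obtain ⟨Q, hsize, hexact⟩ := exists_exact_on_degreeLT (show a < 2 * a by linarith) N
  refine ⟨Q, hsize, fun x hx ↦ ?_⟩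
  obtain ⟨p, hp, hbound⟩ := exists_mem_degreeLT_abs_exp_sub_eval_le_on_dyadic ha.le hx.le N
  have herror := Q.abs_apply_sub_integral_le_of_exact (by linarith)
    (Continuous.intervalIntegrable (by fun_prop) _ _) (p.continuous.intervalIntegrable _ _)
    (hexact p hp) hbound
  have hpow : (a * x) ^ (N + 1) / (N + 1)! * Real.exp (-(a * x)) ≤ 1 := by
    rw [Real.exp_neg, ← div_eq_mul_inv, div_le_one (Real.exp_pos _)]
    exact Real.pow_div_factorial_le_exp _ (by positivity) _
  calc |Q.apply (fun t ↦ Real.exp (-t * x)) - ∫ t in a..2 * a, Real.exp (-t * x)|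
      ≤ 2 * ((a * x) ^ N / N ! / 2 ^ N * Real.exp (-(a * x)) * (2 * a - a)) := herror
    _ = 2 * (N + 1) / 2 ^ N * x⁻¹ * ((a * x) ^ (N + 1) / (N + 1)! * Real.exp (-(a * x))) := by
        rw [Nat.factorial_succ, pow_succ]
        push_cast
        field_simp
        ring
    _ ≤ 2 * (N + 1) / 2 ^ N * x⁻¹ := mul_le_of_le_one_right (by positivity) hpow

theorem exists_abs_apply_exp_sub_integral_le {a : ℝ} (ha : 0 < a) (M N : ℕ) :
    ∃ Q : PositiveQuadrature a (2 ^ M * a), Q.size ≤ M * (N + 1) ∧ ∀ x > 0,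
      |Q.apply (fun t ↦ Real.exp (-t * x)) - ∫ t in a..2 ^ M * a, Real.exp (-t * x)| ≤
        M * (2 * (N + 1) / 2 ^ N * x⁻¹) := by
  induction M with
  | zero =>
    rw [pow_zero, one_mul]
    exact ⟨nil a, by simp [nil], fun x _ ↦ by simp [nil_apply]⟩
  | succ M ih =>
    obtain ⟨Q, hQsize, hQ⟩ := ih
    obtain ⟨R, hRsize, hR⟩ :=
      exists_abs_apply_exp_sub_integral_le_on_dyadic (show 0 < 2 ^ M * a by positivity) N
    rw [pow_succ', mul_assoc]
    have hleft : a ≤ 2 ^ M * a := le_mul_of_one_le_left ha.le (one_le_pow₀ one_le_two)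
    have hright : 2 ^ M * a ≤ 2 * (2 ^ M * a) := by linarith
    refine ⟨Q.append R hleft hright, ?_, fun x hx ↦ ?_⟩
    · rw [add_one_mul]
      exact add_le_add hQsize hRsize
    · have hint (u v : ℝ) : IntervalIntegrable (fun t ↦ Real.exp (-t * x)) volume u v :=
        Continuous.intervalIntegrable (by fun_prop) u v
      rw [append_apply, ← intervalIntegral.integral_add_adjacent_intervals
        (hint a (2 ^ M * a)) (hint _ _), add_sub_add_comm]
      refine (abs_add_le _ _).trans ((add_le_add (hQ x hx) (hR x hx)).trans_eq ?_)
      push_cast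
      ring

theorem exists_abs_apply_exp_sub_inv_le {a : ℝ} (ha : 0 < a) (M N : ℕ) :
    ∃ Q : PositiveQuadrature a (2 ^ M * a), Q.size ≤ M * (N + 1) ∧ ∀ x > 0,
      |Q.apply (fun t ↦ Real.exp (-t * x)) - x⁻¹| ≤
        (M * (2 * (N + 1) / 2 ^ N) + (a * x + (2 ^ M * a * x)⁻¹)) * x⁻¹ := by
  obtain ⟨Q, hsize, hQ⟩ := exists_abs_apply_exp_sub_integral_le ha M N
  refine ⟨Q, hsize, fun x hx ↦ (abs_sub_le _ _ _).trans
    ((add_le_add (hQ x hx) (abs_integral_exp_neg_mul_sub_inv_le ha.le (by positivity) hx)).trans_eq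
      ?_)⟩
  ring

end PositiveQuadrature

theorem natCast_mul_two_mul_div_two_pow_le (M : ℕ) :
    (M : ℝ) * (2 * ((3 * M : ℕ) + 1) / 2 ^ (3 * M)) ≤ 8 / 2 ^ M := by
  have hM_sq : (M : ℝ) ≤ M * M := by exact_mod_cast Nat.le_mul_self M
  have hM_pow : (M : ℝ) ≤ 2 ^ M := by exact_mod_cast Nat.lt_two_pow_self.le
  calc (M : ℝ) * (2 * ((3 * M : ℕ) + 1) / 2 ^ (3 * M))
      = (6 * (M * M) + 2 * M) / 2 ^ (3 * M) := by
        push_cast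
        ring
    _ ≤ 8 * (M * M) / 2 ^ (3 * M) := by
        gcongr
        linarith
    _ ≤ 8 * (2 ^ M * 2 ^ M) / 2 ^ (3 * M) := by gcongr
    _ = 8 / 2 ^ M := by
        rw [show 3 * M = M + M + M by ring, pow_add, pow_add]
        field_simp

theorem exists_two_pow_mem_Icc_sq {y : ℝ} (hy : 1 ≤ y) :
    ∃ M : ℕ, (2 : ℝ) ^ M ∈ Set.Icc (32 * y ^ 2) (64 * y ^ 2) ∧ M ≤ 8 * (Real.log y + 1) := by
  obtain ⟨M, ⟨hlower, hupper⟩, hlog⟩ :=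
    exists_two_pow_mem_Icc (show 1 ≤ 32 * y ^ 2 by nlinarith)
  refine ⟨M, ⟨hlower, by linarith⟩, ?_⟩
  have hlog_eq : Real.log (32 * y ^ 2) = 5 * Real.log 2 + 2 * Real.log y := by
    rw [show (32 : ℝ) = 2 ^ 5 by norm_num, Real.log_mul (by positivity) (by positivity),
      Real.log_pow, Real.log_pow]
    norm_num
  linarith [Real.log_nonneg hy, Real.log_two_lt_d9]

theorem exists_positiveQuadrature_abs_apply_exp_sub_inv_le {ε δ : ℝ}
    (hε : ε ∈ Set.Ioc (0 : ℝ) 1) (hδ : δ ∈ Set.Ioc (0 : ℝ) 1) :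
    ∃ (b : ℝ) (Q : PositiveQuadrature (ε / 4) b), ε / 4 < b ∧ b ≤ 16 * (1 / (ε * δ)) ^ 2 ∧
      Q.size ≤ 256 * (Real.log (1 / (ε * δ)) + 1) ^ 2 ∧
      ∀ x ∈ Set.Icc δ 1, |Q.apply (fun t ↦ Real.exp (-t * x)) - x⁻¹| ≤ ε * x⁻¹ := by
  obtain ⟨hε_pos, hε_le⟩ := hε
  obtain ⟨hδ_pos, hδ_le⟩ := hδ
  set y := 1 / (ε * δ) with hy
  have hy_one : 1 ≤ y := (one_le_div (by positivity)).2 (mul_le_one₀ hε_le hδ_pos.le hδ_le)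
  have hyεδ : y * ε * δ = 1 := by rw [hy, mul_assoc, one_div_mul_cancel (by positivity)]
  have hyε : 1 ≤ y * ε := hyεδ ▸ mul_le_of_le_one_right (by positivity) hδ_le
  obtain ⟨M, ⟨hM_lower, hM_upper⟩, hM_log⟩ := exists_two_pow_mem_Icc_sq hy_one
  obtain ⟨Q, hsize, hQ⟩ :=
    PositiveQuadrature.exists_abs_apply_exp_sub_inv_le (show 0 < ε / 4 by positivity) M (3 * M)
  refine ⟨_, Q, ?_, ?_, ?_, fun x hx ↦ (hQ x (hδ_pos.trans_le hx.1)).trans ?_⟩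
  · exact lt_mul_of_one_lt_left (by positivity) (by nlinarith)
  · nlinarith
  · calc (Q.size : ℝ) ≤ M * (3 * M + 1) := by exact_mod_cast hsize
      _ ≤ 4 * M ^ 2 := by
          have hM_sq : (M : ℝ) ≤ M * M := by exact_mod_cast Nat.le_mul_self M
          linarith
      _ ≤ 4 * (8 * (Real.log y + 1)) ^ 2 := by gcongr
      _ = 256 * (Real.log y + 1) ^ 2 := by ring
  · have hx_pos : 0 < x := hδ_pos.trans_le hx.1
    have hquadrature : (M : ℝ) * (2 * ((3 * M : ℕ) + 1) / 2 ^ (3 * M)) ≤ ε / 4 := by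
      refine (natCast_mul_two_mul_div_two_pow_le M).trans ?_
      rw [div_le_iff₀ (by positivity)]
      nlinarith
    have hnear : ε / 4 * x ≤ ε / 4 := mul_le_of_le_one_right (by positivity) hx.2
    have hfar : (2 ^ M * (ε / 4) * x)⁻¹ ≤ ε / 4 := by
      rw [inv_le_comm₀ (by positivity) (by positivity), inv_div]
      calc 4 / ε ≤ 8 * y := by rw [div_le_iff₀ hε_pos]; linarith
        _ = 32 * y ^ 2 * (ε / 4) * δ := by linear_combination (-8 * y) * hyεδ
        _ ≤ 2 ^ M * (ε / 4) * x := by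
            gcongr
            exact hx.1
    gcongr
    linarith

/-- **Lemma 2 (scalar approximation of `x⁻¹` by a sparse sum of exponentials).**
For every `ε, δ ∈ (0,1]` there exist a positive integer `k` with
`k ≤ C * (log (1/(ε*δ)) + 1)^3` for an absolute constant `C`, and positive reals
`w j, t j` each bounded by a polynomial in `1/(δ*ε)` (formalized as `C * (1/(δ*ε))^C`),
such that for all `x ∈ [δ,1]`,
`(1-ε) * x⁻¹ ≤ ∑ j, w j * exp (-(t j) * x) ≤ (1+ε) * x⁻¹`. -/
theorem inverse_approx_by_exponentials_scalar :
    ∃ C : ℝ, 0 < C ∧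
      ∀ ε δ : ℝ, ε ∈ Set.Ioc (0 : ℝ) 1 → δ ∈ Set.Ioc (0 : ℝ) 1 →
        ∃ (k : ℕ) (w t : Fin k → ℝ),
          0 < k ∧
          (k : ℝ) ≤ C * (Real.log (1 / (ε * δ)) + 1) ^ 3 ∧
          (∀ j, 0 < w j ∧ 0 < t j ∧
            w j ≤ C * (1 / (δ * ε)) ^ C ∧ t j ≤ C * (1 / (δ * ε)) ^ C) ∧
          ∀ x ∈ Set.Icc δ 1,
            (1 - ε) * x⁻¹ ≤ ∑ j, w j * Real.exp (-(t j) * x) ∧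
            ∑ j, w j * Real.exp (-(t j) * x) ≤ (1 + ε) * x⁻¹ := by
  refine ⟨256, by norm_num, fun ε δ hε hδ ↦ ?_⟩
  obtain ⟨b, Q, hb, hb_le, hsize, hQ⟩ := exists_positiveQuadrature_abs_apply_exp_sub_inv_le hε hδ
  have ha : 0 < ε / 4 := div_pos hε.1 four_pos
  have hy : 1 ≤ 1 / (ε * δ) :=
    (one_le_div (mul_pos hε.1 hδ.1)).2 (mul_le_one₀ hε.2 hδ.1.le hδ.2)
  have hb_poly : b ≤ 256 * (1 / (δ * ε)) ^ (256 : ℝ) := by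
    rw [mul_comm δ]
    refine hb_le.trans (mul_le_mul (by norm_num) ?_ (by positivity) (by norm_num))
    exact_mod_cast pow_le_pow_right₀ hy (show 2 ≤ 256 by norm_num)
  refine ⟨Q.size, Q.weight, Q.node, Q.size_pos hb, hsize.trans ?_, fun j ↦ ?_, fun x hx ↦ ?_⟩
  · gcongr
    · linarith [Real.log_nonneg hy]
    · norm_num
  · exact ⟨Q.weight_pos j, ha.trans_le (Q.node_mem j).1,
      ((Q.weight_le j).trans (sub_le_self b ha.le)).trans hb_poly, (Q.node_mem j).2.trans hb_poly⟩
  · obtain ⟨hlower, hupper⟩ := abs_sub_le_iff.1 (hQ x hx)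
    rw [PositiveQuadrature.apply] at hlower hupper
    constructor <;> linarith
end

section
/- For every x > 0 and every non-negative integer k, the k-th derivative of f_x satisfies f_x^{(k)}(s) = f_x(s)·Σ_{j=0}^k c_{k,j}·(−x·e^s)^j for all real s, where the c_{k,j} are non-negative integers (independent of x and s) satisfying Σ_{j=0}^k c_{k,j} ≤ (k+1)^{k+1}. -/
/-!
Put `y s = -x * exp s`, so that `y' = y` and `f = fₓ` satisfies `f' = f * (y + 1)`. Hence
`(f * y ^ j)' = f * ((j + 1) * y ^ j + y ^ (j + 1))`, which is the recurrence of the Stirling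
numbers of the second kind: the coefficient of `f * y ^ j` in `f⁽ᵏ⁾` is `S(k + 1, j + 1)`.
Differentiation turns each `f * y ^ j` with `j ≤ k` into terms of total weight `j + 2 ≤ k + 2`, so
the coefficients of `f⁽ᵏ⁾` sum to at most `(k + 1)! ≤ (k + 1) ^ (k + 1)`.
-/

open Finset Nat

theorem sum_stirlingSecond_succ_succ_mul {R : Type*} [CommSemiring R] (k : ℕ) (w : ℕ → R) :
    ∑ j ∈ range (k + 2), (stirlingSecond (k + 2) (j + 1) : R) * w j =
      ∑ j ∈ range (k + 1),
        (stirlingSecond (k + 1) (j + 1) : R) * ((j + 1) * w j + w (j + 1)) := by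
  have top_term : stirlingSecond (k + 1) (k + 2) = 0 :=
    stirlingSecond_eq_zero_of_lt (Nat.lt_succ_self _)
  calc ∑ j ∈ range (k + 2), (stirlingSecond (k + 2) (j + 1) : R) * w j
      = ∑ j ∈ range (k + 2), (stirlingSecond (k + 1) (j + 1) : R) * ((j + 1) * w j) +
          ∑ j ∈ range (k + 2), (stirlingSecond (k + 1) j : R) * w j := by
        rw [← sum_add_distrib]
        refine sum_congr rfl fun j _ => ?_
        rw [stirlingSecond_succ_succ (k + 1) j]
        push_cast
        ring
    _ = ∑ j ∈ range (k + 1), (stirlingSecond (k + 1) (j + 1) : R) * ((j + 1) * w j) +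
          ∑ j ∈ range (k + 1), (stirlingSecond (k + 1) (j + 1) : R) * w (j + 1) := by
        congr 1
        · simp [sum_range_succ _ (k + 1), top_term]
        · simp [sum_range_succ' _ (k + 1)]
    _ = _ := by simp only [← sum_add_distrib, mul_add]

theorem sum_stirlingSecond_succ_le_factorial (k : ℕ) :
    ∑ j ∈ range (k + 1), stirlingSecond (k + 1) (j + 1) ≤ (k + 1)! := by
  induction k with
  | zero => simp [stirlingSecond_self]
  | succ k ih =>
    calc ∑ j ∈ range (k + 2), stirlingSecond (k + 2) (j + 1)
        = ∑ j ∈ range (k + 1), stirlingSecond (k + 1) (j + 1) * (j + 2) := by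
          simpa using sum_stirlingSecond_succ_succ_mul k (fun _ => (1 : ℕ))
      _ ≤ ∑ j ∈ range (k + 1), stirlingSecond (k + 1) (j + 1) * (k + 2) := by
          gcongr with j hj
          exact mem_range_succ_iff.mp hj
      _ = (k + 2) * ∑ j ∈ range (k + 1), stirlingSecond (k + 1) (j + 1) := by
          rw [← sum_mul, mul_comm]
      _ ≤ (k + 2) * (k + 1)! := by gcongr
      _ = (k + 2)! := (factorial_succ (k + 1)).symm

section LogarithmicDerivative

variable {𝕜 𝔸 : Type*} [NontriviallyNormedField 𝕜] [NormedCommRing 𝔸] [NormedAlgebra 𝕜 𝔸]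
  {f y : 𝕜 → 𝔸}

theorem hasDerivAt_mul_pow_of_hasDerivAt_mul_add_one {s : 𝕜} (hy : HasDerivAt y (y s) s)
    (hf : HasDerivAt f (f s * (y s + 1)) s) (j : ℕ) :
    HasDerivAt (fun t => f t * y t ^ j) (f s * ((j + 1) * y s ^ j + y s ^ (j + 1))) s := by
  refine (hf.fun_mul (hy.fun_pow j)).congr_deriv ?_
  cases j with
  | zero =>
    simp only [pow_zero, Nat.cast_zero]
    ring
  | succ j =>
    rw [Nat.add_sub_cancel]
    push_cast
    ring

theorem iteratedDeriv_eq_mul_sum_stirlingSecond (hy : ∀ s, HasDerivAt y (y s) s)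
    (hf : ∀ s, HasDerivAt f (f s * (y s + 1)) s) (k : ℕ) (s : 𝕜) :
    iteratedDeriv k f s =
      f s * ∑ j ∈ range (k + 1), (stirlingSecond (k + 1) (j + 1) : 𝔸) * y s ^ j := by
  induction k generalizing s with
  | zero => simp [stirlingSecond_self]
  | succ k ih =>
    have expansion : iteratedDeriv k f = fun t =>
        ∑ j ∈ range (k + 1), (stirlingSecond (k + 1) (j + 1) : 𝔸) * (f t * y t ^ j) := by
      funext t
      simp only [ih, mul_sum, mul_left_comm]
    have hasDerivAt_expansion := HasDerivAt.fun_sum (u := range (k + 1)) fun j _ =>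
      (hasDerivAt_mul_pow_of_hasDerivAt_mul_add_one (hy s) (hf s) j).const_mul
        (stirlingSecond (k + 1) (j + 1) : 𝔸)
    rw [iteratedDeriv_succ, expansion, hasDerivAt_expansion.deriv,
      sum_stirlingSecond_succ_succ_mul k (y s ^ ·)]
    simp only [mul_sum, mul_left_comm]

end LogarithmicDerivative

theorem iteratedDeriv_exp_mul_exp_add (a : ℝ) (k : ℕ) (s : ℝ) :
    iteratedDeriv k (fun s : ℝ => Real.exp (a * Real.exp s + s)) s =
      Real.exp (a * Real.exp s + s) *
        ∑ j ∈ range (k + 1), (stirlingSecond (k + 1) (j + 1) : ℝ) * (a * Real.exp s) ^ j := by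
  have hy (t : ℝ) : HasDerivAt (fun t => a * Real.exp t) (a * Real.exp t) t :=
    (Real.hasDerivAt_exp t).const_mul a
  exact iteratedDeriv_eq_mul_sum_stirlingSecond hy
    (fun t => ((hy t).fun_add (hasDerivAt_id' t)).exp) k s

theorem iteratedDeriv_fx_eq_general (k : ℕ) :
    ∃ c : ℕ → ℕ,
      (∑ j ∈ range (k + 1), c j ≤ (k + 1) ^ (k + 1)) ∧
      ∀ a s : ℝ,
        iteratedDeriv k (fun s : ℝ => Real.exp (a * Real.exp s + s)) s =
          Real.exp (a * Real.exp s + s) *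
            ∑ j ∈ range (k + 1), (c j : ℝ) * (a * Real.exp s) ^ j :=
  ⟨fun j => stirlingSecond (k + 1) (j + 1),
    (sum_stirlingSecond_succ_le_factorial k).trans (factorial_le_pow (k + 1)),
    fun a s => iteratedDeriv_exp_mul_exp_add a k s⟩

/-- **Fact 1 (structure of the derivatives of `fₓ`).**
For `fₓ(s) = exp (-x * exp s + s)`, the `k`-th derivative satisfies
`fₓ⁽ᵏ⁾(s) = fₓ(s) * ∑_{j=0}^k c j * (-x * exp s)^j`, where the `c j` are non-negative
integers, independent of `x` and `s`, with `∑_{j=0}^k c j ≤ (k+1)^(k+1)`. -/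
theorem iteratedDeriv_fx_eq (k : ℕ) :
    ∃ c : ℕ → ℕ,
      (∑ j ∈ Finset.range (k + 1), c j ≤ (k + 1) ^ (k + 1)) ∧
      ∀ x : ℝ, 0 < x → ∀ s : ℝ,
        iteratedDeriv k (fun s : ℝ => Real.exp (-x * Real.exp s + s)) s =
          Real.exp (-x * Real.exp s + s) *
            ∑ j ∈ Finset.range (k + 1), (c j : ℝ) * (-x * Real.exp s) ^ j := by
  obtain ⟨c, sum_le, iteratedDeriv_eq⟩ := iteratedDeriv_fx_eq_general k
  exact ⟨c, sum_le, fun x _ => iteratedDeriv_eq (-x)⟩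
end

section
/- For every x > 0, every real s, and every non-negative integer k, |f_x^{(k)}(s)| ≤ f_x(s)·(k+1)^{k+1}·max{1, (x·e^s)^k}. -/
/-!
The functions `g_c(s) = exp (a * exp s + c * s)` satisfy `g_c' = c * g_c + a * g_{c+1}` and
`a * g_{c+1}(s) = (a * exp s) * g_c(s)`. Each differentiation therefore costs a factor of at most
`‖c‖ + ‖a * exp s‖ ≤ (‖c‖ + 1) * max 1 ‖a * exp s‖`, while `c` grows by at most `1`; after `k`
differentiations the total is at most `(‖c‖ + k) ^ k * max 1 ‖a * exp s‖ ^ k`.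
-/

lemma max_pow_of_nonneg {M : Type*} [MonoidWithZero M] [LinearOrder M] [PosMulMono M]
    [MulPosMono M] {a b : M} (ha : 0 ≤ a) (hb : 0 ≤ b) (n : ℕ) :
    max a b ^ n = max (a ^ n) (b ^ n) :=
  pow_left_monotoneOn.map_max (Set.mem_ofPred.2 ha) (Set.mem_ofPred.2 hb)

lemma add_le_add_one_mul_max {R : Type*} [Semiring R] [LinearOrder R] [IsOrderedRing R] {u : R}
    (hu : 0 ≤ u) (v : R) : u + v ≤ (u + 1) * max 1 v :=
  calc u + v ≤ u * max 1 v + max 1 v :=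
        add_le_add (le_mul_of_one_le_right hu (le_max_left 1 v)) (le_max_right 1 v)
    _ = (u + 1) * max 1 v := (add_one_mul u _).symm

section ExpExp

open NormedSpace

variable {𝕜 : Type*} [RCLike 𝕜]

/-- The function `s ↦ exp (a * exp s + c * s)` on `𝕜 = ℝ` or `ℂ`; the `f_x` of the theorem is the
case `a = -x`, `c = 1`. The parameter `c` is there so that derivatives stay in the span of the
family. -/
noncomputable def expExp (a c s : 𝕜) : 𝕜 :=
  exp (a * exp s + c * s)

lemma expExp_add_one (a c s : 𝕜) : expExp a (c + 1) s = exp s * expExp a c s := by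
  rw [expExp, expExp, ← exp_add]
  ring_nf

lemma hasDerivAt_expExp (a c s : 𝕜) :
    HasDerivAt (expExp a c) (c * expExp a c s + a * expExp a (c + 1) s) s := by
  have inner_deriv : HasDerivAt (fun z ↦ a * exp z + c * z) (a * exp s + c * 1) s :=
    (hasDerivAt_exp.const_mul a).add ((hasDerivAt_id s).const_mul c)
  refine (hasDerivAt_exp.comp s inner_deriv).congr_deriv ?_
  rw [expExp_add_one, expExp]
  ring

lemma contDiff_expExp (a c : 𝕜) {n : WithTop ℕ∞} : ContDiff 𝕜 n (expExp a c) := by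
  have contDiff_exp : ContDiff 𝕜 n (exp : 𝕜 → 𝕜) :=
    AnalyticOnNhd.contDiff fun z _ ↦ exp_analytic z
  exact contDiff_exp.comp
    ((contDiff_const.mul contDiff_exp).add (contDiff_const.mul contDiff_id))

lemma iteratedDeriv_succ_expExp (a c s : 𝕜) (k : ℕ) :
    iteratedDeriv (k + 1) (expExp a c) s =
      c * iteratedDeriv k (expExp a c) s + a * iteratedDeriv k (expExp a (c + 1)) s := by
  have deriv_expExp :
      deriv (expExp a c) = fun z ↦ c * expExp a c z + a * expExp a (c + 1) z :=
    funext fun z ↦ (hasDerivAt_expExp a c z).deriv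
  rw [iteratedDeriv_succ', deriv_expExp,
    iteratedDeriv_fun_add (contDiff_const.mul (contDiff_expExp a c)).contDiffAt
      (contDiff_const.mul (contDiff_expExp a (c + 1))).contDiffAt,
    iteratedDeriv_const_mul_field, iteratedDeriv_const_mul_field]

theorem norm_iteratedDeriv_expExp_le (a c s : 𝕜) (k : ℕ) :
    ‖iteratedDeriv k (expExp a c) s‖ ≤
      ‖expExp a c s‖ * (‖c‖ + k) ^ k * max 1 ‖a * exp s‖ ^ k := by
  induction k generalizing c with
  | zero => simp
  | succ k ih =>
    set m := max 1 ‖a * exp s‖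
    set G := ‖expExp a c s‖
    set B := ‖c‖ + (k + 1)
    have norm_add_one_le : ‖c + 1‖ ≤ ‖c‖ + 1 := by simpa using norm_add_le c 1
    have norm_shift : ‖a‖ * ‖expExp a (c + 1) s‖ = ‖a * exp s‖ * G := by
      rw [expExp_add_one, norm_mul, norm_mul, mul_assoc]
    have factor_le : ‖c‖ + ‖a * exp s‖ ≤ B * m :=
      (add_le_add_one_mul_max (norm_nonneg c) _).trans <| by
        gcongr
        linarith [k.cast_nonneg (α := ℝ)]
    calc ‖iteratedDeriv (k + 1) (expExp a c) s‖
        ≤ ‖c‖ * ‖iteratedDeriv k (expExp a c) s‖ +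
            ‖a‖ * ‖iteratedDeriv k (expExp a (c + 1)) s‖ := by
          rw [iteratedDeriv_succ_expExp, ← norm_mul, ← norm_mul]
          exact norm_add_le _ _
      _ ≤ ‖c‖ * (G * (‖c‖ + k) ^ k * m ^ k) +
            ‖a‖ * (‖expExp a (c + 1) s‖ * (‖c + 1‖ + k) ^ k * m ^ k) := by
          gcongr <;> exact ih _
      _ ≤ ‖c‖ * (G * B ^ k * m ^ k) + ‖a‖ * (‖expExp a (c + 1) s‖ * B ^ k * m ^ k) := by
          gcongr ‖c‖ * (G * ?_ ^ k * m ^ k) + ‖a‖ * (‖expExp a (c + 1) s‖ * ?_ ^ k * m ^ k) <;>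
            linarith
      _ = (‖c‖ + ‖a * exp s‖) * (G * B ^ k * m ^ k) := by
          linear_combination B ^ k * m ^ k * norm_shift
      _ ≤ B * m * (G * B ^ k * m ^ k) := by gcongr
      _ = G * (‖c‖ + (k + 1 : ℕ)) ^ (k + 1) * m ^ (k + 1) := by
          push_cast
          ring

theorem abs_iteratedDeriv_fx_le_general (x s : 𝕜) (k : ℕ) :
    ‖iteratedDeriv k (fun s : 𝕜 ↦ exp (-x * exp s + s)) s‖ ≤
      ‖exp (-x * exp s + s)‖ * (k + 1) ^ k * max 1 (‖x * exp s‖ ^ k) := by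
  have expExp_neg_one : expExp (-x) 1 = fun s ↦ exp (-x * exp s + s) := by
    funext s
    rw [expExp, one_mul]
  simpa only [expExp_neg_one, neg_mul, norm_neg, norm_one, add_comm (1 : ℝ),
    max_pow_of_nonneg zero_le_one (norm_nonneg _), one_pow] using
    norm_iteratedDeriv_expExp_le (-x) 1 s k

end ExpExp

/-- **Pointwise derivative bound.** For `fₓ(s) = exp (-x * exp s + s)`,
`|fₓ⁽ᵏ⁾(s)| ≤ fₓ(s) * (k+1)^(k+1) * max 1 ((x * exp s)^k)`. -/
theorem abs_iteratedDeriv_fx_le (x : ℝ) (hx : 0 < x) (s : ℝ) (k : ℕ) :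
    |iteratedDeriv k (fun s : ℝ => Real.exp (-x * Real.exp s + s)) s| ≤
      Real.exp (-x * Real.exp s + s) * (k + 1) ^ (k + 1) *
        max 1 ((x * Real.exp s) ^ k) := by
  have sharp_bound := abs_iteratedDeriv_fx_le_general x s k
  rw [← Real.exp_eq_exp_ℝ, Real.norm_eq_abs, Real.norm_of_nonneg (Real.exp_nonneg _),
    Real.norm_of_nonneg (by positivity : 0 ≤ x * Real.exp s)] at sharp_bound
  refine sharp_bound.trans ?_
  gcongr
  · simp
  · exact k.le_succ
end

section
/- For every x > 0 and every non-negative integer k, ∫_{−∞}^{∞} |f_x^{(k)}(s)| ds ≤ (2/x)·e^k·(k+1)^{2k}. -/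
open MeasureTheory

/-!
Up to the factor `1 / x` and a translation by `log x`, the function `fₓ` is the member `a = 1` of
the family `φₐ(s) = exp (a * s - exp s)`. The substitution `u = exp s` gives `∫ φₐ = Γ(a)`, and
`φₐ' = a * φₐ - φₐ₊₁`, so induction on `k` yields `∫ |φₐ⁽ᵏ⁾| ≤ 2 ^ k * Γ(a + k)`: both terms of the
recurrence contribute at most `2 ^ k * Γ(a + k + 1)`. At `a = 1` this is `2 ^ k * k!`.
-/

lemma lintegral_exp_mul_comp_exp (g : ℝ → ENNReal) :
    ∫⁻ s : ℝ, ENNReal.ofReal (Real.exp s) * g (Real.exp s) = ∫⁻ u in Set.Ioi 0, g u := by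
  have change_of_variables := lintegral_image_eq_lintegral_deriv_mul_of_monotoneOn
    MeasurableSet.univ (fun s _ => (Real.hasDerivAt_exp s).hasDerivWithinAt)
    (Real.exp_monotone.monotoneOn Set.univ) g
  rw [Set.image_univ, Real.range_exp, setLIntegral_univ] at change_of_variables
  exact change_of_variables.symm

lemma lintegral_exp_neg_mul_rpow_eq_Gamma {a : ℝ} (ha : 0 < a) :
    ∫⁻ u in Set.Ioi 0, ENNReal.ofReal (Real.exp (-u) * u ^ (a - 1)) =
      ENNReal.ofReal (Real.Gamma a) := by
  rw [Real.Gamma_eq_integral ha,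
    ofReal_integral_eq_lintegral_ofReal (Real.GammaIntegral_convergent ha)]
  filter_upwards [ae_restrict_mem measurableSet_Ioi] with u hu
  exact mul_nonneg (Real.exp_nonneg _) (Real.rpow_nonneg (le_of_lt hu) _)

lemma mul_Gamma_le_Gamma_add_one {a b : ℝ} (hb : 0 < b) (hab : a ≤ b) :
    a * Real.Gamma b ≤ Real.Gamma (b + 1) := by
  rw [Real.Gamma_add_one hb.ne']
  gcongr

/-- The unnormalised density `s ↦ exp (a * s - exp s)` of the logarithm of a random variable with
the Gamma distribution of shape `a` and rate `1`. -/
noncomputable def logGammaKernel (a s : ℝ) : ℝ :=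
  Real.exp (a * s - Real.exp s)

namespace logGammaKernel

lemma contDiff (a : ℝ) {n : WithTop ℕ∞} : ContDiff ℝ n (logGammaKernel a) := by
  unfold logGammaKernel
  fun_prop

lemma exp_mul (a s : ℝ) : Real.exp s * logGammaKernel a s = logGammaKernel (a + 1) s := by
  rw [logGammaKernel, logGammaKernel, ← Real.exp_add]
  ring_nf

lemma deriv_eq (a : ℝ) :
    deriv (logGammaKernel a) = fun s => a * logGammaKernel a s - logGammaKernel (a + 1) s := by
  funext s
  have exponent_deriv : HasDerivAt (fun s => a * s - Real.exp s) (a - Real.exp s) s := by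
    simpa using ((hasDerivAt_id s).const_mul a).fun_sub (Real.hasDerivAt_exp s)
  calc deriv (logGammaKernel a) s
      = logGammaKernel a s * (a - Real.exp s) := exponent_deriv.exp.deriv
    _ = a * logGammaKernel a s - logGammaKernel (a + 1) s := by rw [← exp_mul]; ring

lemma iteratedDeriv_succ_eq (k : ℕ) (a s : ℝ) :
    iteratedDeriv (k + 1) (logGammaKernel a) s =
      a * iteratedDeriv k (logGammaKernel a) s - iteratedDeriv k (logGammaKernel (a + 1)) s := by
  rw [iteratedDeriv_succ', deriv_eq,
    iteratedDeriv_fun_sub (contDiff_const.mul (contDiff a)).contDiffAt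
      (contDiff (a + 1)).contDiffAt,
    iteratedDeriv_const_mul_field]

lemma lintegral_enorm {a : ℝ} (ha : 0 < a) :
    ∫⁻ s, ‖logGammaKernel a s‖ₑ = ENNReal.ofReal (Real.Gamma a) := by
  rw [← lintegral_exp_neg_mul_rpow_eq_Gamma ha, ← lintegral_exp_mul_comp_exp]
  refine lintegral_congr fun s => ?_
  rw [logGammaKernel, Real.enorm_of_nonneg (Real.exp_nonneg _),
    ← ENNReal.ofReal_mul (Real.exp_nonneg s), ← Real.exp_mul, ← Real.exp_add, ← Real.exp_add]
  ring_nf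

lemma measurable_enorm_iteratedDeriv (k : ℕ) (a : ℝ) :
    Measurable fun s => ‖iteratedDeriv k (logGammaKernel a) s‖ₑ :=
  ((contDiff a).continuous_iteratedDeriv k le_rfl).measurable.enorm

lemma lintegral_enorm_iteratedDeriv_succ_le (k : ℕ) (a : ℝ) :
    ∫⁻ s, ‖iteratedDeriv (k + 1) (logGammaKernel a) s‖ₑ ≤
      ‖a‖ₑ * (∫⁻ s, ‖iteratedDeriv k (logGammaKernel a) s‖ₑ) +
        ∫⁻ s, ‖iteratedDeriv k (logGammaKernel (a + 1)) s‖ₑ := by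
  rw [← lintegral_const_mul _ (measurable_enorm_iteratedDeriv k a),
    ← lintegral_add_right _ (measurable_enorm_iteratedDeriv k (a + 1))]
  refine lintegral_mono fun s => ?_
  rw [iteratedDeriv_succ_eq, ← enorm_mul]
  exact enorm_sub_le

lemma lintegral_enorm_iteratedDeriv_le (k : ℕ) {a : ℝ} (ha : 0 < a) :
    ∫⁻ s, ‖iteratedDeriv k (logGammaKernel a) s‖ₑ ≤
      ENNReal.ofReal (2 ^ k * Real.Gamma (a + k)) := by
  induction k generalizing a with
  | zero => simp [lintegral_enorm ha]
  | succ k ih =>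
    have mul_Gamma_le : a * Real.Gamma (a + k) ≤ Real.Gamma (a + k + 1) :=
      mul_Gamma_le_Gamma_add_one (by positivity) (le_add_of_nonneg_right k.cast_nonneg)
    calc ∫⁻ s, ‖iteratedDeriv (k + 1) (logGammaKernel a) s‖ₑ
        ≤ ‖a‖ₑ * (∫⁻ s, ‖iteratedDeriv k (logGammaKernel a) s‖ₑ) +
            ∫⁻ s, ‖iteratedDeriv k (logGammaKernel (a + 1)) s‖ₑ :=
          lintegral_enorm_iteratedDeriv_succ_le k a
      _ ≤ ENNReal.ofReal a * ENNReal.ofReal (2 ^ k * Real.Gamma (a + k)) +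
            ENNReal.ofReal (2 ^ k * Real.Gamma (a + 1 + k)) := by
          rw [Real.enorm_of_nonneg ha.le]
          gcongr
          · exact ih ha
          · exact ih (by positivity)
      _ = ENNReal.ofReal (2 ^ k * (a * Real.Gamma (a + k) + Real.Gamma (a + k + 1))) := by
          rw [add_right_comm a 1, ← ENNReal.ofReal_mul ha.le,
            ← ENNReal.ofReal_add (by positivity) (by positivity)]
          ring_nf
      _ ≤ ENNReal.ofReal (2 ^ k * (Real.Gamma (a + k + 1) + Real.Gamma (a + k + 1))) := by
          gcongr
      _ = ENNReal.ofReal (2 ^ (k + 1) * Real.Gamma (a + ↑(k + 1))) := by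
          push_cast
          ring_nf

end logGammaKernel

lemma exp_neg_mul_exp_add_eq {x : ℝ} (hx : 0 < x) (s : ℝ) :
    Real.exp (-x * Real.exp s + s) = x⁻¹ * logGammaKernel 1 (s + Real.log x) := by
  rw [logGammaKernel, one_mul, Real.exp_sub, Real.exp_add s, Real.exp_log hx, Real.exp_add,
    neg_mul, Real.exp_neg, mul_comm x (Real.exp s)]
  field_simp

lemma lintegral_enorm_iteratedDeriv_exp_neg_mul_exp_add_le {x : ℝ} (hx : 0 < x) (k : ℕ) :
    ∫⁻ s, ‖iteratedDeriv k (fun s => Real.exp (-x * Real.exp s + s)) s‖ₑ ≤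
      ENNReal.ofReal (2 ^ k * k.factorial / x) := by
  have iteratedDeriv_eq (s : ℝ) :
      iteratedDeriv k (fun s => Real.exp (-x * Real.exp s + s)) s =
        x⁻¹ * iteratedDeriv k (logGammaKernel 1) (s + Real.log x) := by
    simp only [exp_neg_mul_exp_add_eq hx, iteratedDeriv_const_mul_field,
      iteratedDeriv_comp_add_const]
  calc ∫⁻ s, ‖iteratedDeriv k (fun s => Real.exp (-x * Real.exp s + s)) s‖ₑ
      = ∫⁻ s, ‖x⁻¹‖ₑ * ‖iteratedDeriv k (logGammaKernel 1) s‖ₑ := by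
        simp only [iteratedDeriv_eq, enorm_mul]
        exact lintegral_add_right_eq_self
          (fun s => ‖x⁻¹‖ₑ * ‖iteratedDeriv k (logGammaKernel 1) s‖ₑ) (Real.log x)
    _ = ENNReal.ofReal x⁻¹ * ∫⁻ s, ‖iteratedDeriv k (logGammaKernel 1) s‖ₑ := by
        rw [lintegral_const_mul _ (logGammaKernel.measurable_enorm_iteratedDeriv k 1),
          Real.enorm_of_nonneg (inv_nonneg.2 hx.le)]
    _ ≤ ENNReal.ofReal x⁻¹ * ENNReal.ofReal (2 ^ k * Real.Gamma (1 + k)) := by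
        gcongr
        exact logGammaKernel.lintegral_enorm_iteratedDeriv_le k one_pos
    _ = ENNReal.ofReal (2 ^ k * k.factorial / x) := by
        rw [← ENNReal.ofReal_mul (inv_nonneg.2 hx.le), add_comm, Real.Gamma_nat_eq_factorial,
          div_eq_inv_mul]

lemma factorial_le_succ_pow_two_mul (k : ℕ) : k.factorial ≤ (k + 1) ^ (2 * k) :=
  calc k.factorial ≤ k ^ k := k.factorial_le_pow
    _ ≤ (k + 1) ^ k := by gcongr; exact k.le_succ
    _ ≤ (k + 1) ^ (2 * k) := by gcongr <;> lia

/-- **Lemma 3 (smoothness: `L¹` bound on the derivatives of `fₓ`).**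
For `fₓ(s) = exp (-x * exp s + s)`,
`∫_{-∞}^∞ |fₓ⁽ᵏ⁾(s)| ds ≤ (2/x) * e^k * (k+1)^(2k)`.
(The integral is stated as a Lebesgue integral, so the bound in particular
asserts finiteness, i.e. integrability.) -/
theorem integral_abs_iteratedDeriv_fx_le (x : ℝ) (hx : 0 < x) (k : ℕ) :
    ∫⁻ s : ℝ, ENNReal.ofReal
        |iteratedDeriv k (fun s : ℝ => Real.exp (-x * Real.exp s + s)) s| ≤
      ENNReal.ofReal (2 / x * Real.exp 1 ^ k * (k + 1) ^ (2 * k)) := by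
  simp only [← Real.enorm_eq_ofReal_abs]
  refine (lintegral_enorm_iteratedDeriv_exp_neg_mul_exp_add_le hx k).trans
    (ENNReal.ofReal_le_ofReal ?_)
  have factorial_le : (k.factorial : ℝ) ≤ (k + 1) ^ (2 * k) :=
    mod_cast factorial_le_succ_pow_two_mul k
  calc 2 ^ k * k.factorial / x
      ≤ Real.exp 1 ^ k * (k + 1) ^ (2 * k) / x := by
        gcongr
        exact Real.exp_one_gt_two.le
    _ ≤ 2 * (Real.exp 1 ^ k * (k + 1) ^ (2 * k) / x) :=
        le_mul_of_one_le_left (by positivity) one_le_two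
    _ = 2 / x * Real.exp 1 ^ k * (k + 1) ^ (2 * k) := by ring
end

section
/- For every non-negative integer k and every s ∈ [0,1], |B_{2k}(s)|/(2k)! ≤ |b_{2k}|/(2k)! ≤ 4/(2π)^{2k}, where B_{2k} is the 2k-th Bernoulli polynomial and b_{2k} is the 2k-th Bernoulli number. -/
open Real

/-!
For `k ≥ 1` and `s ∈ [0, 1]`, the Fourier expansion of `B_{2k}` reads
`B_{2k}(s) / (2k)! = ± 2 / (2π)^{2k} * ∑ n ≥ 1, cos (2πns) / n^{2k}`.
All coefficients are nonnegative, so the absolute value is largest at `s = 0`, where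
it equals `|b_{2k}| / (2k)! = 2 ζ(2k) / (2π)^{2k}`. Finally `2 ζ(2k) ≤ 2 ζ(2) = π² / 3 ≤ 4`.
-/

theorem abs_tsum_mul_cos_le_tsum {ι : Type*} {a : ι → ℝ} (ha_nonneg : ∀ i, 0 ≤ a i)
    (ha : Summable a) (θ : ι → ℝ) : |∑' i, a i * cos (θ i)| ≤ ∑' i, a i := by
  rw [← norm_eq_abs]
  refine tsum_of_norm_bounded ha.hasSum fun i => ?_
  rw [norm_mul, norm_of_nonneg (ha_nonneg i)]
  exact mul_le_of_le_one_right (ha_nonneg i) (abs_cos_le_one _)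

theorem tsum_one_div_nat_pow_le_pi_sq_div_six {m : ℕ} (hm : 2 ≤ m) :
    ∑' n : ℕ, 1 / (n : ℝ) ^ m ≤ π ^ 2 / 6 := by
  rw [← hasSum_zeta_two.tsum_eq]
  refine Summable.tsum_le_tsum (fun n => ?_)
    (summable_one_div_nat_pow.mpr (by lia)) hasSum_zeta_two.summable
  rcases n.eq_zero_or_pos with rfl | hn
  · simp [show m ≠ 0 by lia]
  · have one_le_n : (1 : ℝ) ≤ n := mod_cast hn
    gcongr

section

variable {k : ℕ} {s : ℝ}

theorem abs_bernoulliFun_two_mul_div_factorial (hk : k ≠ 0) (hs : s ∈ Set.Icc (0 : ℝ) 1) :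
    |bernoulliFun (2 * k) s| / (2 * k).factorial =
      2 / (2 * π) ^ (2 * k) * |∑' n : ℕ, 1 / (n : ℝ) ^ (2 * k) * cos (2 * π * n * s)| := by
  have fourier_series : ∑' n : ℕ, 1 / (n : ℝ) ^ (2 * k) * cos (2 * π * n * s) =
      (-1) ^ (k + 1) * (2 * π) ^ (2 * k) / 2 / (2 * k).factorial * bernoulliFun (2 * k) s :=
    (hasSum_one_div_nat_pow_mul_cos hk hs).tsum_eq
  rw [fourier_series]
  simp only [abs_mul, abs_div, abs_pow, abs_neg, abs_one, one_pow, one_mul, abs_two,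
    abs_of_pos pi_pos, Nat.abs_cast]
  field_simp

theorem abs_bernoulli_two_mul_div_factorial (hk : k ≠ 0) :
    |(bernoulli (2 * k) : ℝ)| / (2 * k).factorial =
      2 / (2 * π) ^ (2 * k) * ∑' n : ℕ, 1 / (n : ℝ) ^ (2 * k) := by
  have zeta_nonneg : 0 ≤ ∑' n : ℕ, 1 / (n : ℝ) ^ (2 * k) := tsum_nonneg fun n => by positivity
  simpa only [bernoulliFun_eval_zero, mul_zero, cos_zero, mul_one, abs_of_nonneg zeta_nonneg]
    using abs_bernoulliFun_two_mul_div_factorial hk (Set.left_mem_Icc.mpr zero_le_one)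

theorem abs_bernoulliFun_two_mul_le_abs_bernoulli (k : ℕ) (hs : s ∈ Set.Icc (0 : ℝ) 1) :
    |bernoulliFun (2 * k) s| ≤ |(bernoulli (2 * k) : ℝ)| := by
  rcases eq_or_ne k 0 with rfl | hk
  · simp [bernoulliFun]
  · have factorial_pos : (0 : ℝ) < (2 * k).factorial := mod_cast Nat.factorial_pos _
    rw [← div_le_div_iff_of_pos_right factorial_pos,
      abs_bernoulliFun_two_mul_div_factorial hk hs, abs_bernoulli_two_mul_div_factorial hk]
    gcongr
    exact abs_tsum_mul_cos_le_tsum (fun n => by positivity)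
      (summable_one_div_nat_pow.mpr (by lia)) _

theorem abs_bernoulli_two_mul_div_factorial_le_pi_sq_div_three_div (hk : k ≠ 0) :
    |(bernoulli (2 * k) : ℝ)| / (2 * k).factorial ≤ π ^ 2 / 3 / (2 * π) ^ (2 * k) :=
  calc |(bernoulli (2 * k) : ℝ)| / (2 * k).factorial
    _ = 2 / (2 * π) ^ (2 * k) * ∑' n : ℕ, 1 / (n : ℝ) ^ (2 * k) :=
      abs_bernoulli_two_mul_div_factorial hk
    _ ≤ 2 / (2 * π) ^ (2 * k) * (π ^ 2 / 6) := by
      gcongr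
      exact tsum_one_div_nat_pow_le_pi_sq_div_six (by lia)
    _ = π ^ 2 / 3 / (2 * π) ^ (2 * k) := by ring

theorem abs_bernoulli_two_mul_div_factorial_le_four_div (k : ℕ) :
    |(bernoulli (2 * k) : ℝ)| / (2 * k).factorial ≤ 4 / (2 * π) ^ (2 * k) := by
  rcases eq_or_ne k 0 with rfl | hk
  · norm_num
  · have pi_sq_div_three_le_four : π ^ 2 / 3 ≤ 4 := by nlinarith [pi_pos, pi_lt_d2]
    exact (abs_bernoulli_two_mul_div_factorial_le_pi_sq_div_three_div hk).trans (by gcongr)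

end

/-- **Lemma 4 (Bernoulli bounds).** For every `k ≥ 0` and `s ∈ [0,1]`,
`|B_{2k}(s)| / (2k)! ≤ |b_{2k}| / (2k)! ≤ 4 / (2π)^(2k)`, where `B_{2k}` is the `2k`-th
Bernoulli polynomial and `b_{2k}` the `2k`-th Bernoulli number. -/
theorem bernoulli_poly_bound (k : ℕ) (s : ℝ) (hs : s ∈ Set.Icc (0 : ℝ) 1) :
    |Polynomial.aeval s (Polynomial.bernoulli (2 * k))| / (2 * k).factorial ≤
      |(bernoulli (2 * k) : ℝ)| / (2 * k).factorial ∧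
    |(bernoulli (2 * k) : ℝ)| / (2 * k).factorial ≤ 4 / (2 * π) ^ (2 * k) := by
  refine ⟨?_, abs_bernoulli_two_mul_div_factorial_le_four_div k⟩
  rw [← Polynomial.eval_map_algebraMap]
  exact div_le_div_of_nonneg_right (abs_bernoulliFun_two_mul_le_abs_bernoulli k hs)
    (Nat.cast_nonneg _)
end

section
/- (Euler–Maclaurin formula) Let g : ℝ → ℝ be 2N-times continuously differentiable, let a < b, h > 0, and suppose K := (b−a)/h is a positive integer. Then ∫_a^b g(s) ds − T_g = h^{2N+1}·∫_0^K (B_{2N}(s−⌊s⌋)/(2N)!)·g^{(2N)}(a+sh) ds − Σ_{j=1}^N (b_{2j}/(2j)!)·h^{2j}·(g^{(2j−1)}(b) − g^{(2j−1)}(a)), where T_g := (h/2)·Σ_{j=0}^{K−1} (g(a+jh) + g(a+(j+1)h)). -/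
open Real

/-!
Since `B_{k+1} / (k+1)!` is an antiderivative of `B_k / k!`, repeated integration by parts on
`[0, 1]`, starting from `B_0 = 1`, expands `∫₀¹ f` in the derivatives of `f` at the endpoints.
As `B_1(1) = -B_1(0) = 1/2`, the first boundary term is the trapezoidal rule; as `B_k(0) = B_k(1)`
for `k ≥ 2`, the later ones are differences of derivatives, which telescope when the formula is
summed over consecutive unit intervals. An affine substitution gives step `h`, and only even-order
corrections survive because `b_k = 0` for odd `k ≥ 3`.
-/

section EulerMaclaurin

open MeasureTheory intervalIntegral Finset

lemma neg_one_pow_mul_bernoulli_of_ne_one {k : ℕ} (hk : k ≠ 1) :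
    (-1) ^ k * bernoulli k = bernoulli k := by
  rw [← bernoulli'_eq_bernoulli, bernoulli_eq_bernoulli'_of_ne_one hk]

lemma sum_Icc_two_bernoulli_mul_eq_sum_even {R : Type*} [DivisionRing R] (N : ℕ) (x : ℕ → R) :
    ∑ k ∈ Icc 2 (2 * N), (bernoulli k : R) * x k =
      ∑ j ∈ Icc 1 N, (bernoulli (2 * j) : R) * x (2 * j) := by
  induction N with
  | zero => simp
  | succ N ih =>
    rcases N.eq_zero_or_pos with rfl | hN
    · simp
    · have odd_eq_zero : bernoulli (2 * N + 1) = 0 :=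
        bernoulli_eq_zero_of_odd (odd_two_mul_add_one N) (by lia)
      rw [sum_Icc_succ_top (by lia), ← ih, mul_add_one, sum_Icc_succ_top (by lia),
        sum_Icc_succ_top (by lia), odd_eq_zero, Rat.cast_zero, zero_mul, add_zero]

lemma hasDerivAt_bernoulliFun_div_factorial (k : ℕ) (x : ℝ) :
    HasDerivAt (fun s ↦ bernoulliFun (k + 1) s / (k + 1).factorial)
      (bernoulliFun k x / k.factorial) x := by
  refine ((antideriv_bernoulliFun k x).div_const (k.factorial : ℝ)).congr_of_eventuallyEq ?_
  refine .of_forall fun s ↦ ?_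
  simp only [Nat.factorial_succ, Nat.cast_mul, Nat.cast_succ, div_div]

section IteratedDeriv

variable {𝕜 F : Type*} [NontriviallyNormedField 𝕜] [NormedAddCommGroup F] [NormedSpace 𝕜 F]

lemma hasDerivAt_iteratedDeriv {f : 𝕜 → F} {n k : ℕ} (hf : ContDiff 𝕜 n f) (hk : k < n) (x : 𝕜) :
    HasDerivAt (iteratedDeriv k f) (iteratedDeriv (k + 1) f x) x := by
  rw [iteratedDeriv_succ]
  exact (hf.differentiable_iteratedDeriv k (mod_cast hk) x).hasDerivAt

lemma iteratedDeriv_comp_const_add_mul_const {n : ℕ} {g : 𝕜 → F} (hg : ContDiff 𝕜 n g)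
    (a h s : 𝕜) :
    iteratedDeriv n (fun t ↦ g (a + t * h)) s = h ^ n • iteratedDeriv n g (a + s * h) := by
  have hga : ContDiff 𝕜 n fun x ↦ g (a + x) := by fun_prop
  simp only [mul_comm _ h]
  rw [iteratedDeriv_comp_const_smul hga, iteratedDeriv_comp_const_add]

end IteratedDeriv

lemma intervalIntegrable_comp_fract {F : Type*} [NormedAddCommGroup F] {B : ℝ → F}
    (hB : IntervalIntegrable B volume 0 1) (a b : ℝ) :
    IntervalIntegrable (fun s ↦ B (Int.fract s)) volume a b := by
  have periodic : Function.Periodic (fun s : ℝ ↦ B (Int.fract s)) 1 :=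
    fun s ↦ congrArg B (Int.fract_add_one s)
  refine periodic.intervalIntegrable₀ one_ne_zero ?_ a b
  refine hB.congr_uIoo fun s hs ↦ ?_
  rw [Set.uIoo_of_le zero_le_one] at hs
  exact congrArg B (Int.fract_eq_self.mpr ⟨hs.1.le, hs.2⟩).symm

variable {E : Type*} [NormedAddCommGroup E] [NormedSpace ℝ E]

lemma integral_zero_natCast_eq_sum_integral_zero_one {F : ℝ → E} {K : ℕ}
    (hF : ∀ j < K, IntervalIntegrable F volume j (j + 1)) :
    ∫ s in (0 : ℝ)..K, F s = ∑ j ∈ range K, ∫ s in (0 : ℝ)..1, F (j + s) := by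
  have adjacent := sum_integral_adjacent_intervals (a := fun j : ℕ ↦ (j : ℝ)) (n := K)
    (fun j hj ↦ by simpa only [Nat.cast_succ] using hF j hj)
  rw [Nat.cast_zero] at adjacent
  rw [← adjacent]
  exact sum_congr rfl fun j _ ↦ by
    rw [integral_comp_add_left (fun s ↦ F s), add_zero, Nat.cast_succ]

lemma integral_comp_fract_smul_eq_sum {B : ℝ → ℝ} {G : ℝ → E}
    (hB : IntervalIntegrable B volume 0 1) (hG : Continuous G) (K : ℕ) :
    ∫ s in (0 : ℝ)..K, B (Int.fract s) • G s =
      ∑ j ∈ range K, ∫ s in (0 : ℝ)..1, B s • G (j + s) := by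
  rw [integral_zero_natCast_eq_sum_integral_zero_one fun j _ ↦
    (intervalIntegrable_comp_fract hB _ _).smul_continuousOn hG.continuousOn]
  refine sum_congr rfl fun j _ ↦ integral_congr_uIoo fun s hs ↦ ?_
  rw [Set.uIoo_of_le zero_le_one] at hs
  simp only [Int.fract_natCast_add, Int.fract_eq_self.mpr ⟨hs.1.le, hs.2⟩]

variable [CompleteSpace E]

lemma integral_bernoulliFun_smul_eq_sub {f f' : ℝ → E} {a b : ℝ} (k : ℕ)
    (hf : ∀ x ∈ Set.uIcc a b, HasDerivAt f (f' x) x) (hf' : IntervalIntegrable f' volume a b) :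
    ∫ s in a..b, (bernoulliFun k s / k.factorial) • f s =
      (bernoulliFun (k + 1) b / (k + 1).factorial) • f b -
        (bernoulliFun (k + 1) a / (k + 1).factorial) • f a -
        ∫ s in a..b, (bernoulliFun (k + 1) s / (k + 1).factorial) • f' s := by
  rw [integral_smul_deriv_eq_deriv_smul (fun x _ ↦ hasDerivAt_bernoulliFun_div_factorial k x) hf
    ((intervalIntegrable_bernoulliFun k a b).div_const _) hf', sub_sub_cancel]

lemma integral_zero_one_sub_average_eq {f f' : ℝ → E}
    (hf : ∀ x ∈ Set.uIcc (0 : ℝ) 1, HasDerivAt f (f' x) x)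
    (hf' : IntervalIntegrable f' volume 0 1) :
    (∫ s in (0 : ℝ)..1, f s) - (1 / 2 : ℝ) • (f 0 + f 1) =
      -∫ s in (0 : ℝ)..1, bernoulliFun 1 s • f' s := by
  have by_parts := integral_bernoulliFun_smul_eq_sub 0 hf hf'
  simp only [bernoulliFun_zero, zero_add, Nat.factorial_zero, Nat.factorial_one, Nat.cast_one,
    div_one, one_smul] at by_parts
  rw [by_parts, bernoulliFun_one 0, bernoulliFun_one 1]
  module

lemma integral_zero_one_bernoulliFun_smul_eq_sub {f f' : ℝ → E} {k : ℕ} (hk : k ≠ 0)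
    (hf : ∀ x ∈ Set.uIcc (0 : ℝ) 1, HasDerivAt f (f' x) x)
    (hf' : IntervalIntegrable f' volume 0 1) :
    ∫ s in (0 : ℝ)..1, (bernoulliFun k s / k.factorial) • f s =
      (bernoulli (k + 1) / (k + 1).factorial : ℝ) • (f 1 - f 0) -
        ∫ s in (0 : ℝ)..1, (bernoulliFun (k + 1) s / (k + 1).factorial) • f' s := by
  rw [integral_bernoulliFun_smul_eq_sub k hf hf',
    bernoulliFun_endpoints_eq_of_ne_one (by lia), bernoulliFun_eval_zero, smul_sub]

lemma euler_maclaurin_zero_one {n : ℕ} (hn : n ≠ 0) {f : ℝ → E} (hf : ContDiff ℝ n f) :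
    (∫ s in (0 : ℝ)..1, f s) - (1 / 2 : ℝ) • (f 0 + f 1) =
      (-1 : ℝ) ^ n •
          (∫ s in (0 : ℝ)..1, (bernoulliFun n s / n.factorial) • iteratedDeriv n f s) -
        ∑ k ∈ Icc 2 n, (bernoulli k / k.factorial : ℝ) •
          (iteratedDeriv (k - 1) f 1 - iteratedDeriv (k - 1) f 0) := by
  have integrable_iteratedDeriv {m : ℕ} (hm : ContDiff ℝ m f) :
      IntervalIntegrable (iteratedDeriv m f) volume 0 1 :=
    (hm.continuous_iteratedDeriv m le_rfl).intervalIntegrable 0 1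
  induction n, Nat.one_le_iff_ne_zero.mpr hn using Nat.le_induction with
  | base =>
    have first_order := integral_zero_one_sub_average_eq
      (fun x _ ↦ hasDerivAt_iteratedDeriv hf one_pos x) (integrable_iteratedDeriv hf)
    simpa using first_order
  | succ n hn ih =>
    have next_order := integral_zero_one_bernoulliFun_smul_eq_sub (k := n) (by lia)
      (fun x _ ↦ hasDerivAt_iteratedDeriv hf n.lt_succ_self x) (integrable_iteratedDeriv hf)
    have sign : (-1 : ℝ) ^ n * bernoulli (n + 1) = -bernoulli (n + 1) := by
      have parity := neg_one_pow_mul_bernoulli_of_ne_one (k := n + 1) (by lia)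
      rw [pow_succ, mul_neg_one, neg_mul, neg_eq_iff_eq_neg] at parity
      exact_mod_cast parity
    rw [ih (by lia) (hf.of_le (mod_cast n.le_succ)), next_order, sum_Icc_succ_top (by lia),
      Nat.add_sub_cancel, smul_sub, smul_smul, ← mul_div_assoc, sign, pow_succ]
    module

lemma euler_maclaurin_unit_step {n : ℕ} (hn : n ≠ 0) {f : ℝ → E} (hf : ContDiff ℝ n f) (K : ℕ) :
    (∫ s in (0 : ℝ)..K, f s) - (1 / 2 : ℝ) • ∑ j ∈ range K, (f j + f (j + 1)) =
      (-1 : ℝ) ^ n • (∫ s in (0 : ℝ)..K,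
          (bernoulliFun n (Int.fract s) / n.factorial) • iteratedDeriv n f s) -
        ∑ k ∈ Icc 2 n, (bernoulli k / k.factorial : ℝ) •
          (iteratedDeriv (k - 1) f K - iteratedDeriv (k - 1) f 0) := by
  have telescope (k : ℕ) : iteratedDeriv k f K - iteratedDeriv k f 0 =
      ∑ j ∈ range K, (iteratedDeriv k f (j + 1) - iteratedDeriv k f j) := by
    simpa using (sum_range_sub (fun j : ℕ ↦ iteratedDeriv k f j) K).symm
  have unit_interval (j : ℕ) := euler_maclaurin_zero_one hn (f := fun s ↦ f (j + s)) (by fun_prop)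
  simp only [iteratedDeriv_comp_const_add, add_zero] at unit_interval
  rw [integral_zero_natCast_eq_sum_integral_zero_one
      fun j _ ↦ hf.continuous.intervalIntegrable _ _,
    integral_comp_fract_smul_eq_sum ((intervalIntegrable_bernoulliFun n 0 1).div_const _)
      (hf.continuous_iteratedDeriv n le_rfl)]
  simp only [telescope, smul_sum]
  rw [sum_comm, ← sum_sub_distrib, ← sum_sub_distrib]
  exact sum_congr rfl fun j _ ↦ unit_interval j

theorem euler_maclaurin_general {n : ℕ} (hn : n ≠ 0) {g : ℝ → E} (hg : ContDiff ℝ n g) (a h : ℝ)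
    (K : ℕ) :
    (∫ s in a..a + K * h, g s) -
        (h / 2) • ∑ j ∈ range K, (g (a + j * h) + g (a + (j + 1) * h)) =
      ((-1) ^ n * h ^ (n + 1)) • (∫ s in (0 : ℝ)..K,
          (bernoulliFun n (Int.fract s) / n.factorial) • iteratedDeriv n g (a + s * h)) -
        ∑ k ∈ Icc 2 n, (bernoulli k / k.factorial * h ^ k : ℝ) •
          (iteratedDeriv (k - 1) g (a + K * h) - iteratedDeriv (k - 1) g a) := by
  have substitution : ∫ s in a..a + K * h, g s = h • ∫ s in (0 : ℝ)..K, g (a + s * h) := by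
    simp [mul_comm _ h]
  have unit_step := euler_maclaurin_unit_step hn (f := fun s ↦ g (a + s * h)) (by fun_prop) K
  have remainder (s : ℝ) := iteratedDeriv_comp_const_add_mul_const hg a h s
  have correction : ∀ k ∈ Icc 2 n, ∀ s : ℝ, h • iteratedDeriv (k - 1) (fun t ↦ g (a + t * h)) s =
      h ^ k • iteratedDeriv (k - 1) g (a + s * h) := fun k hk s ↦ by
    obtain ⟨hk₂, hkn⟩ := mem_Icc.mp hk
    rw [iteratedDeriv_comp_const_add_mul_const (hg.of_le (mod_cast (k.sub_le 1).trans hkn)),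
      smul_smul, mul_pow_sub_one (by lia)]
  calc
    _ = h • ((∫ s in (0 : ℝ)..K, g (a + s * h)) -
          (1 / 2 : ℝ) • ∑ j ∈ range K, (g (a + j * h) + g (a + (j + 1) * h))) := by
      rw [substitution]; module
    _ = _ := by
      rw [unit_step, smul_sub, smul_sum]
      congr 1
      · simp only [remainder, smul_comm _ (h ^ n), intervalIntegral.integral_smul]
        module
      · refine sum_congr rfl fun k hk ↦ ?_
        rw [smul_comm h, smul_sub h, correction k hk, correction k hk, zero_mul, add_zero]
        module

end EulerMaclaurin

/-- **Euler–Maclaurin formula for the trapezoidal rule.** Let `g : ℝ → ℝ` be `2N`-times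
continuously differentiable, `a < b`, `h > 0`, and `K = (b-a)/h` a positive integer. Then
`∫_a^b g - T_g = h^(2N+1) ∫_0^K (B_{2N}({s})/(2N)!) g⁽²ᴺ⁾(a+sh) ds
  - ∑_{j=1}^N (b_{2j}/(2j)!) h^(2j) (g⁽²ʲ⁻¹⁾(b) - g⁽²ʲ⁻¹⁾(a))`,
where `T_g = (h/2) ∑_{j=0}^{K-1} (g(a+jh) + g(a+(j+1)h))` and `{s} = s - ⌊s⌋`. -/
theorem euler_maclaurin (N : ℕ) (hN : 0 < N) (g : ℝ → ℝ)
    (hg : ContDiff ℝ (2 * N : ℕ) g) (a b h : ℝ) (hab : a < b) (hh : 0 < h)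
    (K : ℕ) (hK : 0 < K) (hKh : (b - a) / h = K) :
    (∫ s in a..b, g s) -
        h / 2 * ∑ j ∈ Finset.range K, (g (a + j * h) + g (a + (j + 1) * h)) =
      h ^ (2 * N + 1) *
          (∫ s in (0 : ℝ)..(K : ℝ),
            Polynomial.aeval (Int.fract s) (Polynomial.bernoulli (2 * N)) /
                (2 * N).factorial *
              iteratedDeriv (2 * N) g (a + s * h)) -
        ∑ j ∈ Finset.Icc 1 N,
          (bernoulli (2 * j) : ℝ) / (2 * j).factorial * h ^ (2 * j) *
            (iteratedDeriv (2 * j - 1) g b - iteratedDeriv (2 * j - 1) g a) := by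
  obtain rfl : b = a + K * h := by
    rw [← hKh, div_mul_cancel₀ _ hh.ne', add_sub_cancel]
  have even_terms := sum_Icc_two_bernoulli_mul_eq_sum_even N fun k ↦ h ^ k / k.factorial *
    (iteratedDeriv (k - 1) g (a + K * h) - iteratedDeriv (k - 1) g a)
  have formula := euler_maclaurin_general (by lia) hg a h K
  simp only [smul_eq_mul, bernoulliFun, Polynomial.eval_map_algebraMap,
    (even_two_mul N).neg_one_pow, one_mul] at formula
  rw [formula]
  congr 1
  convert even_terms using 2 <;> ring
end

section
/- For every x > 0, every h > 0, and every positive integer N, the doubly infinite sum h·Σ_{j∈ℤ} f_x(jh) converges and |∫_{−∞}^{∞} f_x(s) ds − h·Σ_{j∈ℤ} f_x(jh)| ≤ 4·(h/(2π))^{2N}·∫_{−∞}^{∞} |f_x^{(2N)}(s)| ds. -/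
open Real MeasureTheory

open Set Polynomial
open scoped FourierTransform

/-!
Poisson summation turns the trapezoidal error into `∑_{n ≠ 0} 𝓕 g n` for `g t = f (h * t)`. The
Fourier transform of `g⁽ᵏ⁾` is `(2πi n)ᵏ 𝓕 g n`, so each of these terms is at most
`(2π|n|)⁻ᵏ ∫ |g⁽ᵏ⁾|`, and summing over `n ≠ 0` produces the factor `2 ζ(k) ≤ π² / 3 < 4`.

All that is required of `f` is that its derivatives up to order `k ≥ 2` exist and are integrable:
integrability of `f` and `f'` alone bounds `sup |f|` over a unit interval by an integral over that
interval, which gives the locally uniform convergence of `∑ f (t + n)` that Poisson summation needs.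
For `f_x`, each derivative is a polynomial in `exp s` times `f_x s`, and the substitution
`y = exp s` reduces its integrability to that of `P(y) exp (-x y)` on `(0, ∞)`.
-/

section LatticeSums

variable {E : Type*} [NormedAddCommGroup E] [NormedSpace ℝ E] [CompleteSpace E] {f : ℝ → E}

theorem norm_sub_le_integral_norm_deriv (hf : ContDiff ℝ 1 f) {a b t u : ℝ}
    (ht : t ∈ Icc a b) (hu : u ∈ Icc a b) :
    ‖f t - f u‖ ≤ ∫ v in a..b, ‖deriv f v‖ := by
  have hab : a ≤ b := ht.1.trans ht.2
  have hf' : Continuous (deriv f) := hf.continuous_deriv_one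
  have hsub : uIoc u t ⊆ uIoc a b := by
    rw [uIoc_of_le hab]
    exact Ioc_subset_Ioc (le_min hu.1 ht.1) (max_le hu.2 ht.2)
  have ftc : ∫ v in u..t, deriv f v = f t - f u :=
    intervalIntegral.integral_deriv_eq_sub (fun v _ ↦ hf.differentiable one_ne_zero v)
      (hf'.intervalIntegrable u t)
  calc ‖f t - f u‖ = ‖∫ v in u..t, deriv f v‖ := by rw [ftc]
    _ ≤ |∫ v in u..t, ‖deriv f v‖| := intervalIntegral.norm_integral_le_abs_integral_norm
    _ ≤ |∫ v in a..b, ‖deriv f v‖| :=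
      intervalIntegral.abs_integral_mono_interval hsub (.of_forall fun _ ↦ norm_nonneg _)
        (hf'.norm.intervalIntegrable a b)
    _ = ∫ v in a..b, ‖deriv f v‖ :=
      abs_of_nonneg (intervalIntegral.integral_nonneg hab fun _ _ ↦ norm_nonneg _)

theorem mul_norm_le_integral_norm_add_integral_norm_deriv (hf : ContDiff ℝ 1 f) {a b t : ℝ}
    (ht : t ∈ Icc a b) :
    (b - a) * ‖f t‖ ≤ (∫ u in a..b, ‖f u‖) + (b - a) * ∫ u in a..b, ‖deriv f u‖ := by
  have norm_le_of_mem (u : ℝ) (hu : u ∈ Icc a b) :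
      ‖f t‖ ≤ ‖f u‖ + ∫ v in a..b, ‖deriv f v‖ :=
    (norm_le_norm_add_norm_sub' _ _).trans
      (add_le_add_right (norm_sub_le_integral_norm_deriv hf ht hu) _)
  calc (b - a) * ‖f t‖ = ∫ _ in a..b, ‖f t‖ := by simp
    _ ≤ ∫ u in a..b, (‖f u‖ + ∫ v in a..b, ‖deriv f v‖) :=
      intervalIntegral.integral_mono_on (ht.1.trans ht.2) intervalIntegrable_const
        ((hf.continuous.norm.add continuous_const).intervalIntegrable a b) norm_le_of_mem
    _ = (∫ u in a..b, ‖f u‖) + (b - a) * ∫ u in a..b, ‖deriv f u‖ := by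
      rw [intervalIntegral.integral_add (hf.continuous.norm.intervalIntegrable a b)
        intervalIntegrable_const]
      simp

theorem exists_summable_norm_comp_add_intCast_le (hf : ContDiff ℝ 1 f) (hfi : Integrable f)
    (hfi' : Integrable (deriv f)) {K : Set ℝ} (hK : IsCompact K) :
    ∃ u : ℤ → ℝ, Summable u ∧ ∀ n, 0 ≤ u n ∧ ∀ t ∈ K, ‖f (t + n)‖ ≤ u n := by
  refine hK.induction_on ?empty ?mono ?union ?nhds
  case empty => exact ⟨0, summable_zero, by simp⟩
  case mono =>
    rintro s t hst ⟨u, hu, hle⟩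
    exact ⟨u, hu, fun n ↦ ⟨(hle n).1, fun r hr ↦ (hle n).2 r (hst hr)⟩⟩
  case union =>
    rintro s t ⟨u, hu, hule⟩ ⟨v, hv, hvle⟩
    refine ⟨u + v, hu.add hv, fun n ↦ ⟨add_nonneg (hule n).1 (hvle n).1, ?_⟩⟩
    rintro r (hr | hr)
    · exact ((hule n).2 r hr).trans (le_add_of_nonneg_right (hvle n).1)
    · exact ((hvle n).2 r hr).trans (le_add_of_nonneg_left (hule n).1)
  case nhds =>
    intro r _
    set a : ℝ := r - 1 / 2
    refine ⟨Icc a (a + 1), mem_nhdsWithin_of_mem_nhds (Icc_mem_nhds (by grind) (by grind)), _,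
      (hfi.norm.hasSum_intervalIntegral a).summable.add
        (hfi'.norm.hasSum_intervalIntegral a).summable, fun n ↦ ⟨?_, fun t ht ↦ ?_⟩⟩
    · have hab : a + n ≤ a + n + 1 := by linarith
      exact add_nonneg (intervalIntegral.integral_nonneg hab fun _ _ ↦ norm_nonneg _)
        (intervalIntegral.integral_nonneg hab fun _ _ ↦ norm_nonneg _)
    · have ht' : t + n ∈ Icc (a + n) (a + n + 1) := by grind
      simpa using mul_norm_le_integral_norm_add_integral_norm_deriv hf ht'

theorem summable_intCast_of_integrable_deriv (hf : ContDiff ℝ 1 f) (hfi : Integrable f)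
    (hfi' : Integrable (deriv f)) : Summable fun n : ℤ ↦ f n := by
  obtain ⟨u, hu, hle⟩ := exists_summable_norm_comp_add_intCast_le hf hfi hfi' isCompact_singleton
  exact hu.of_norm_bounded fun n ↦ by simpa using (hle n).2 0 rfl

theorem summable_intCast_mul_of_integrable_deriv (hf : ContDiff ℝ 1 f) (hfi : Integrable f)
    (hfi' : Integrable (deriv f)) {h : ℝ} (hh : h ≠ 0) : Summable fun n : ℤ ↦ f (n * h) := by
  have hderiv : deriv (fun t ↦ f (t * h)) = fun t ↦ h • deriv f (t * h) :=
    funext fun t ↦ by simpa [mul_comm] using deriv_comp_mul_left h f t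
  refine summable_intCast_of_integrable_deriv (f := fun t ↦ f (t * h)) (by fun_prop)
    (hfi.comp_mul_right' hh) ?_
  rw [hderiv]
  exact (hfi'.comp_mul_right' hh).smul h

end LatticeSums

theorem tsum_intCast_eq_tsum_fourier_of_integrable_deriv {f : ℝ → ℂ} (hf : ContDiff ℝ 1 f)
    (hfi : Integrable f) (hfi' : Integrable (deriv f)) (hsum : Summable fun n : ℤ ↦ 𝓕 f n) :
    ∑' n : ℤ, f n = ∑' n : ℤ, 𝓕 f n := by
  have locally_summable (K : TopologicalSpace.Compacts ℝ) : Summable fun n : ℤ ↦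
      ‖((⟨f, hf.continuous⟩ : C(ℝ, ℂ)).comp (ContinuousMap.addRight n)).restrict K‖ := by
    obtain ⟨u, hu, hle⟩ := exists_summable_norm_comp_add_intCast_le hf hfi hfi' K.isCompact
    refine hu.of_nonneg_of_le (fun _ ↦ norm_nonneg _) fun n ↦ ?_
    exact (ContinuousMap.norm_le _ (hle n).1).2 fun t ↦ (hle n).2 t t.2
  simpa using Real.tsum_eq_tsum_fourier locally_summable hsum 0

-- Since `1 / 0 = 0`, the terms at `n = 0` vanish and the sum over `ℕ` is `ζ(k)`.
theorem hasSum_int_one_div_abs_pow {k : ℕ} (hk : 1 < k) :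
    HasSum (fun n : ℤ ↦ 1 / |(n : ℝ)| ^ k) (2 * ∑' n : ℕ, 1 / (n : ℝ) ^ k) := by
  have hnat : HasSum (fun n : ℕ ↦ 1 / (n : ℝ) ^ k) (∑' n : ℕ, 1 / (n : ℝ) ^ k) :=
    (Real.summable_one_div_nat_pow.2 hk).hasSum
  have hasSum_int := HasSum.of_nat_of_neg (f := fun n : ℤ ↦ 1 / |(n : ℝ)| ^ k)
    (by simpa using hnat) (by simpa using hnat)
  simpa [two_mul, (zero_lt_one.trans hk).ne'] using hasSum_int

theorem tsum_nat_one_div_pow_le {k : ℕ} (hk : 2 ≤ k) :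
    ∑' n : ℕ, 1 / (n : ℝ) ^ k ≤ π ^ 2 / 6 := by
  rw [← hasSum_zeta_two.tsum_eq]
  refine (Real.summable_one_div_nat_pow.2 hk).tsum_le_tsum (fun n ↦ ?_) hasSum_zeta_two.summable
  rcases n.eq_zero_or_pos with rfl | hn
  · simp [(two_pos.trans_le hk).ne']
  · gcongr
    exact_mod_cast hn

theorem two_mul_tsum_nat_one_div_pow_le_four {k : ℕ} (hk : 2 ≤ k) :
    2 * ∑' n : ℕ, 1 / (n : ℝ) ^ k ≤ 4 := by
  nlinarith [tsum_nat_one_div_pow_le hk, pi_lt_d2, pi_pos]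

section FourierDecay

variable {E : Type*} [NormedAddCommGroup E] [NormedSpace ℂ E] {f : ℝ → E} {k : ℕ}

theorem two_pi_mul_abs_pow_mul_norm_fourier_le (hf : ContDiff ℝ k f)
    (hfi : ∀ m ≤ k, Integrable (iteratedDeriv m f)) (ξ : ℝ) :
    (2 * π * |ξ|) ^ k * ‖𝓕 f ξ‖ ≤ ∫ t, ‖iteratedDeriv k f t‖ := by
  have hfourier : 𝓕 (iteratedDeriv k f) ξ = (2 * π * Complex.I * ξ) ^ k • 𝓕 f ξ :=
    congrFun (Real.fourier_iteratedDeriv (N := k) hf (by exact_mod_cast hfi) le_rfl) ξ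
  calc (2 * π * |ξ|) ^ k * ‖𝓕 f ξ‖ = ‖𝓕 (iteratedDeriv k f) ξ‖ := by
        rw [hfourier, norm_smul]
        simp [abs_of_pos pi_pos]
    _ ≤ ∫ t, ‖iteratedDeriv k f t‖ :=
        VectorFourier.norm_fourierIntegral_le_integral_norm _ _ _ _ _

theorem norm_fourier_le_mul_one_div_abs_pow (hf : ContDiff ℝ k f)
    (hfi : ∀ m ≤ k, Integrable (iteratedDeriv m f)) {ξ : ℝ} (hξ : ξ ≠ 0) :
    ‖𝓕 f ξ‖ ≤ (∫ t, ‖iteratedDeriv k f t‖) / (2 * π) ^ k * (1 / |ξ| ^ k) := by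
  rw [div_mul_div_comm, mul_one, ← mul_pow, le_div_iff₀' (by positivity)]
  exact two_pi_mul_abs_pow_mul_norm_fourier_le hf hfi ξ

end FourierDecay

section TrapezoidError

variable {f : ℝ → ℂ} {k : ℕ}

theorem norm_integral_sub_tsum_intCast_le (hk : 2 ≤ k) (hf : ContDiff ℝ k f)
    (hfi : ∀ m ≤ k, Integrable (iteratedDeriv m f)) :
    ‖(∫ t, f t) - ∑' n : ℤ, f n‖ ≤
      2 * (∑' n : ℕ, 1 / (n : ℝ) ^ k) * ((∫ t, ‖iteratedDeriv k f t‖) / (2 * π) ^ k) := by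
  set A : ℝ := (∫ t, ‖iteratedDeriv k f t‖) / (2 * π) ^ k
  have hmajorant := (hasSum_int_one_div_abs_pow hk).mul_left A
  have hle (n : ℤ) : ‖if n = 0 then 0 else 𝓕 f n‖ ≤ A * (1 / |(n : ℝ)| ^ k) := by
    split_ifs with hn
    · rw [norm_zero]
      positivity
    · exact norm_fourier_le_mul_one_div_abs_pow hf hfi (Int.cast_ne_zero.2 hn)
  have hsum : Summable fun n : ℤ ↦ 𝓕 f n := by
    refine hmajorant.summable.of_norm_bounded_eventually ?_
    filter_upwards [(finite_singleton (0 : ℤ)).compl_mem_cofinite] with n hn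
    exact norm_fourier_le_mul_one_div_abs_pow hf hfi (Int.cast_ne_zero.2 hn)
  have hpoisson : ∑' n : ℤ, f n = ∑' n : ℤ, 𝓕 f n := by
    refine tsum_intCast_eq_tsum_fourier_of_integrable_deriv
      (hf.of_le (by exact_mod_cast one_le_two.trans hk)) ?_ ?_ hsum
    · simpa using hfi 0 (Nat.zero_le k)
    · simpa using hfi 1 (one_le_two.trans hk)
  have hzero : 𝓕 f ((0 : ℤ) : ℝ) = ∫ t, f t := by
    simp [Real.fourier_real_eq_integral_exp_smul]
  calc ‖(∫ t, f t) - ∑' n : ℤ, f n‖ = ‖∑' n : ℤ, if n = 0 then 0 else 𝓕 f n‖ := by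
        rw [hpoisson, hsum.tsum_eq_add_tsum_ite 0, hzero, sub_add_cancel_left, norm_neg]
    _ ≤ A * (2 * ∑' n : ℕ, 1 / (n : ℝ) ^ k) := tsum_of_norm_bounded hmajorant hle
    _ = 2 * (∑' n : ℕ, 1 / (n : ℝ) ^ k) * A := mul_comm _ _

theorem norm_integral_sub_mul_tsum_intCast_mul_le {h : ℝ} (hh : 0 < h) (hk : 2 ≤ k)
    (hf : ContDiff ℝ k f) (hfi : ∀ m ≤ k, Integrable (iteratedDeriv m f)) :
    ‖(∫ s, f s) - h * ∑' j : ℤ, f (j * h)‖ ≤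
      2 * (∑' n : ℕ, 1 / (n : ℝ) ^ k) * (h / (2 * π)) ^ k * ∫ s, ‖iteratedDeriv k f s‖ := by
  set g : ℝ → ℂ := fun t ↦ f (h * t) with hg
  have hderiv {m : ℕ} (hm : m ≤ k) :
      iteratedDeriv m g = fun t ↦ h ^ m • iteratedDeriv m f (h * t) :=
    iteratedDeriv_comp_const_smul (hf.of_le (by exact_mod_cast hm)) h
  have hgi (m : ℕ) (hm : m ≤ k) : Integrable (iteratedDeriv m g) := by
    rw [hderiv hm]
    exact ((hfi m hm).comp_mul_left' hh.ne').smul (h ^ m)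
  have integral_g : ∫ s, f s = h * ∫ t, g t := by
    rw [Measure.integral_comp_mul_left f h, abs_of_pos (inv_pos.2 hh), Complex.real_smul,
      Complex.ofReal_inv, mul_inv_cancel_left₀ (Complex.ofReal_ne_zero.2 hh.ne')]
  have integral_norm_g :
      h * ∫ t, ‖iteratedDeriv k g t‖ = h ^ k * ∫ s, ‖iteratedDeriv k f s‖ := by
    simp_rw [hderiv le_rfl, norm_smul, norm_of_nonneg (pow_nonneg hh.le k)]
    rw [integral_const_mul, Measure.integral_comp_mul_left (fun s ↦ ‖iteratedDeriv k f s‖) h,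
      abs_of_pos (inv_pos.2 hh), smul_eq_mul]
    field_simp
  calc ‖(∫ s, f s) - h * ∑' j : ℤ, f (j * h)‖
      = h * ‖(∫ t, g t) - ∑' n : ℤ, g n‖ := by
        rw [integral_g, ← mul_sub, norm_mul, Complex.norm_of_nonneg hh.le]
        simp only [hg, mul_comm h]
    _ ≤ h * (2 * (∑' n : ℕ, 1 / (n : ℝ) ^ k) *
          ((∫ t, ‖iteratedDeriv k g t‖) / (2 * π) ^ k)) := by
        gcongr
        exact norm_integral_sub_tsum_intCast_le hk (by fun_prop) hgi
    _ = 2 * (∑' n : ℕ, 1 / (n : ℝ) ^ k) * ((h * ∫ t, ‖iteratedDeriv k g t‖) / (2 * π) ^ k) := by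
        ring
    _ = 2 * (∑' n : ℕ, 1 / (n : ℝ) ^ k) * (h / (2 * π)) ^ k *
          ∫ s, ‖iteratedDeriv k f s‖ := by
        rw [integral_norm_g, div_pow]
        ring

end TrapezoidError

theorem iteratedDeriv_clm_comp {𝕜 E F : Type*} [NontriviallyNormedField 𝕜]
    [NormedAddCommGroup E] [NormedSpace 𝕜 E] [NormedAddCommGroup F] [NormedSpace 𝕜 F]
    (L : E →L[𝕜] F) {f : 𝕜 → E} {k : ℕ} (hf : ContDiff 𝕜 k f) :
    iteratedDeriv k (L ∘ f) = L ∘ iteratedDeriv k f := by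
  ext s
  simp [iteratedDeriv, L.iteratedFDeriv_comp_left hf.contDiffAt le_rfl]

theorem abs_integral_sub_mul_tsum_intCast_mul_le {f : ℝ → ℝ} {k : ℕ} {h : ℝ} (hh : 0 < h)
    (hk : 2 ≤ k) (hf : ContDiff ℝ k f) (hfi : ∀ m ≤ k, Integrable (iteratedDeriv m f)) :
    |(∫ s, f s) - h * ∑' j : ℤ, f (j * h)| ≤
      2 * (∑' n : ℕ, 1 / (n : ℝ) ^ k) * (h / (2 * π)) ^ k * ∫ s, |iteratedDeriv k f s| := by
  have hderiv {m : ℕ} (hm : m ≤ k) :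
      iteratedDeriv m (fun s ↦ (f s : ℂ)) = fun s ↦ ((iteratedDeriv m f s : ℝ) : ℂ) :=
    iteratedDeriv_clm_comp Complex.ofRealCLM (hf.of_le (by exact_mod_cast hm))
  have hcomplex := norm_integral_sub_mul_tsum_intCast_mul_le (f := fun s ↦ (f s : ℂ)) hh hk
    (Complex.ofRealCLM.contDiff.comp hf)
    (fun m hm ↦ hderiv hm ▸ (hfi m hm).ofReal)
  simp only [hderiv le_rfl, Complex.norm_real, Real.norm_eq_abs,
    integral_complex_ofReal] at hcomplex
  exact_mod_cast hcomplex

theorem integrableOn_eval_mul_exp_neg_mul_Ioi {x : ℝ} (hx : 0 < x) (P : ℝ[X]) :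
    IntegrableOn (fun y ↦ P.eval y * exp (-x * y)) (Ioi 0) := by
  induction P using Polynomial.induction_on' with
  | add p q hp hq =>
    simp only [eval_add, add_mul]
    exact hp.add hq
  | monomial n a =>
    have hn : (-1 : ℝ) < n := neg_one_lt_zero.trans_le n.cast_nonneg
    have hmonomial := (integrableOn_rpow_mul_exp_neg_mul_rpow hn one_pos hx).const_mul a
    simpa only [IntegrableOn, rpow_natCast, rpow_one, eval_monomial, mul_assoc] using hmonomial

theorem integrable_exp_smul_comp_exp_iff {E : Type*} [NormedAddCommGroup E] [NormedSpace ℝ E]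
    {g : ℝ → E} : Integrable (fun s ↦ exp s • g (exp s)) ↔ IntegrableOn g (Ioi 0) := by
  rw [← Real.range_exp, ← image_univ, integrableOn_image_iff_integrableOn_abs_deriv_smul
    MeasurableSet.univ (fun s _ ↦ (Real.hasDerivAt_exp s).hasDerivWithinAt)
    Real.exp_injective.injOn, integrableOn_univ]
  simp only [abs_exp]

/-- The integrand `f_x` whose trapezoidal sums are studied, with the parameter `x` as first argument
and the integration variable `s` as second. The substitution `y = exp s` identifies `∫ f_x` with
`∫_0^∞ exp (-x * y) dy`. -/
noncomputable def expKernel (x s : ℝ) : ℝ :=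
  exp (-x * exp s + s)

namespace expKernel

theorem contDiff (x : ℝ) {n : WithTop ℕ∞} : ContDiff ℝ n (expKernel x) := by
  unfold expKernel
  fun_prop

theorem hasDerivAt_eval_exp_mul (x : ℝ) (P : ℝ[X]) (s : ℝ) :
    HasDerivAt (fun s ↦ P.eval (exp s) * expKernel x s)
      ((X * derivative P + (1 - C x * X) * P).eval (exp s) * expKernel x s) s := by
  have hP : HasDerivAt (fun s ↦ P.eval (exp s)) ((derivative P).eval (exp s) * exp s) s :=
    (P.hasDerivAt (exp s)).comp s (Real.hasDerivAt_exp s)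
  have hkernel : HasDerivAt (expKernel x) (expKernel x s * (-x * exp s + 1)) s :=
    (((Real.hasDerivAt_exp s).const_mul (-x)).add (hasDerivAt_id s)).exp
  refine (hP.mul hkernel).congr_deriv ?_
  simp only [eval_add, eval_sub, eval_mul, eval_X, eval_C, eval_one]
  ring

theorem exists_iteratedDeriv_eq_eval_exp_mul (x : ℝ) (k : ℕ) :
    ∃ P : ℝ[X], iteratedDeriv k (expKernel x) = fun s ↦ P.eval (exp s) * expKernel x s := by
  induction k with
  | zero => exact ⟨1, by simp⟩
  | succ k ih =>
    obtain ⟨P, hP⟩ := ih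
    refine ⟨X * derivative P + (1 - C x * X) * P, ?_⟩
    rw [iteratedDeriv_succ, hP]
    exact funext fun s ↦ (hasDerivAt_eval_exp_mul x P s).deriv

theorem integrable_iteratedDeriv {x : ℝ} (hx : 0 < x) (k : ℕ) :
    Integrable (iteratedDeriv k (expKernel x)) := by
  obtain ⟨P, hP⟩ := exists_iteratedDeriv_eq_eval_exp_mul x k
  refine (integrable_exp_smul_comp_exp_iff.2
    (integrableOn_eval_mul_exp_neg_mul_Ioi hx P)).congr (.of_forall fun s ↦ ?_)
  simp only [hP, expKernel, exp_add, smul_eq_mul]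
  ring

theorem summable_intCast_mul {x : ℝ} (hx : 0 < x) {h : ℝ} (hh : h ≠ 0) :
    Summable fun j : ℤ ↦ expKernel x (j * h) :=
  summable_intCast_mul_of_integrable_deriv (contDiff x)
    (by simpa using integrable_iteratedDeriv hx 0) (by simpa using integrable_iteratedDeriv hx 1) hh

end expKernel

theorem trapezoid_error_fx_general (x : ℝ) (hx : 0 < x) (h : ℝ) (hh : 0 < h)
    (k : ℕ) (hk : 2 ≤ k) :
    Summable (fun j : ℤ => expKernel x (j * h)) ∧
    |(∫ s : ℝ, expKernel x s) - h * ∑' j : ℤ, expKernel x (j * h)| ≤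
      2 * (∑' n : ℕ, 1 / (n : ℝ) ^ k) * (h / (2 * π)) ^ k *
        ∫ s : ℝ, |iteratedDeriv k (expKernel x) s| :=
  ⟨expKernel.summable_intCast_mul hx hh.ne',
    abs_integral_sub_mul_tsum_intCast_mul_le hh hk (expKernel.contDiff x)
      fun m _ ↦ expKernel.integrable_iteratedDeriv hx m⟩

/-- **Trapezoidal approximation of `∫ fₓ` over `ℝ` (equation (6)).**
For `fₓ(s) = exp (-x * exp s + s)`, any `h > 0` and any `N ≥ 1`, the doubly infinite sum
`h * ∑_{j ∈ ℤ} fₓ(jh)` converges and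
`|∫_{-∞}^∞ fₓ(s) ds - h * ∑_{j ∈ ℤ} fₓ(jh)| ≤ 4 * (h/(2π))^(2N) * ∫_{-∞}^∞ |fₓ⁽²ᴺ⁾(s)| ds`. -/
theorem trapezoid_error_fx (x : ℝ) (hx : 0 < x) (h : ℝ) (hh : 0 < h)
    (N : ℕ) (hN : 0 < N) :
    Summable (fun j : ℤ => Real.exp (-x * Real.exp (j * h) + j * h)) ∧
    |(∫ s : ℝ, Real.exp (-x * Real.exp s + s)) -
        h * ∑' j : ℤ, Real.exp (-x * Real.exp (j * h) + j * h)| ≤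
      4 * (h / (2 * π)) ^ (2 * N) *
        ∫ s : ℝ, |iteratedDeriv (2 * N) (fun s : ℝ => Real.exp (-x * Real.exp s + s)) s| := by
  have hk : 2 ≤ 2 * N := by omega
  refine (trapezoid_error_fx_general x hx h hh (2 * N) hk).imp_right fun herror ↦ herror.trans ?_
  gcongr ?_ * _ * _
  exact two_mul_tsum_nat_one_div_pow_le_four hk
end

section
/- Let ε ∈ (0,1], set N := ⌈(1/2)·log(24/ε)⌉ and h := 2π/(e²·(2N+1)²). Then for every x > 0, |x⁻¹ − h·Σ_{j∈ℤ} e^{jh}·e^{−x·e^{jh}}| ≤ 8·e^{−2N}·x⁻¹ ≤ (ε/3)·x⁻¹. -/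
open Real

/-!
The sum `h ∑ⱼ e ^ (jh) e ^ (-x e ^ (jh))` is the trapezoidal rule with step `h` for
`∫ u, e ^ u e ^ (-x e ^ u) = x⁻¹`. By Poisson summation its error is the sum of the Fourier
transform of the integrand over the nonzero points `k / h`. Euler's integral evaluates that
transform at `ξ` as `x⁻¹ ^ s * Γ(s)` with `s = 1 - 2πiξ`, of modulus `x⁻¹ ‖Γ(s)‖`, so the relative
error is bounded independently of `x`. The reflection formula gives
`‖Γ(1 + iy)‖ ^ 2 = πy / sinh (πy)`, hence `‖Γ(1 + iy)‖ ≤ 3 e ^ (-|y|)` for `|y| ≥ 1`, and the error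
series is dominated by a geometric series of ratio `e ^ (-2π/h)`.
-/

open Asymptotics Filter MeasureTheory
open scoped FourierTransform

section Series

variable {E : Type*} [NormedAddCommGroup E] [CompleteSpace E]

lemma norm_tsum_int_sub_apply_zero_le_of_geometric {f : ℤ → E} {C r : ℝ} (hr₀ : 0 ≤ r)
    (hr₁ : r < 1) (hf : ∀ k : ℤ, k ≠ 0 → ‖f k‖ ≤ C * r ^ k.natAbs) :
    ‖∑' k, f k - f 0‖ ≤ 2 * (C * (r / (1 - r))) := by
  have hgeom : HasSum (fun n : ℕ ↦ C * r ^ (n + 1)) (C * (r / (1 - r))) := by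
    simpa only [pow_succ', div_eq_mul_inv] using
      ((hasSum_geometric_of_lt_one hr₀ hr₁).mul_left r).mul_left C
  have hpos (n : ℕ) : ‖f (n + 1)‖ ≤ C * r ^ (n + 1) := by
    simpa only [← Nat.cast_succ, Int.natAbs_natCast] using hf (n + 1) (by lia)
  have hneg (n : ℕ) : ‖f (-(n + 1))‖ ≤ C * r ^ (n + 1) := by
    simpa only [← Nat.cast_succ, Int.natAbs_neg, Int.natAbs_natCast] using hf (-(n + 1)) (by lia)
  have hsplit := tsum_of_add_one_of_neg_add_one (.of_norm_bounded hgeom.summable hpos)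
    (.of_norm_bounded hgeom.summable hneg)
  calc ‖∑' k, f k - f 0‖
      = ‖∑' n : ℕ, f (n + 1) + ∑' n : ℕ, f (-(n + 1))‖ := by rw [hsplit]; congr 1; abel
    _ ≤ C * (r / (1 - r)) + C * (r / (1 - r)) :=
      norm_add_le_of_le (tsum_of_norm_bounded hgeom hpos) (tsum_of_norm_bounded hgeom hneg)
    _ = 2 * (C * (r / (1 - r))) := by ring

end Series

section Poisson

variable {E : Type*} [NormedAddCommGroup E]

lemma isBigO_cocompact_rpow_comp_mul_const {f : ℝ → E} {b c : ℝ} (hc : c ≠ 0)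
    (hf : f =O[cocompact ℝ] fun u ↦ |u| ^ b) :
    (fun u ↦ f (u * c)) =O[cocompact ℝ] fun u ↦ |u| ^ b := by
  have hscale : Tendsto (· * c) (cocompact ℝ) (cocompact ℝ) :=
    (Homeomorph.mulRight₀ c hc).isClosedEmbedding.tendsto_cocompact
  refine (hf.comp_tendsto hscale).trans ?_
  simp only [Function.comp_def, abs_mul, mul_rpow (abs_nonneg _) (abs_nonneg _)]
  simpa only [mul_comm] using isBigO_const_mul_self (|c| ^ b) (fun u : ℝ ↦ |u| ^ b) (cocompact ℝ)

lemma fourier_comp_mul_const [NormedSpace ℂ E] (f : ℝ → E) {c : ℝ} (hc : c ≠ 0) (ξ : ℝ) :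
    𝓕 (fun u ↦ f (u * c)) ξ = |c⁻¹| • 𝓕 f (ξ / c) := by
  simp only [Real.fourier_eq', ← Measure.integral_comp_mul_right]
  congr 1 with u
  have hinner : inner ℝ u ξ = inner ℝ (u * c) (ξ / c) := by
    rw [RCLike.inner_apply, RCLike.inner_apply, conj_trivial, conj_trivial]
    field
  rw [hinner]

lemma mul_tsum_eq_tsum_fourier_of_rpow_decay {f : ℝ → ℂ} (hcont : Continuous f) {b : ℝ}
    (hb : 1 < b) (hf : f =O[cocompact ℝ] fun u ↦ |u| ^ (-b))
    (hFf : 𝓕 f =O[cocompact ℝ] fun u ↦ |u| ^ (-b)) {h : ℝ} (hh : 0 < h) :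
    h * ∑' j : ℤ, f (j * h) = ∑' k : ℤ, 𝓕 f (k / h) := by
  have hfourier : 𝓕 (fun u ↦ f (u * h)) = fun ξ ↦ (h⁻¹ : ℂ) * 𝓕 f (ξ * h⁻¹) := by
    ext ξ
    rw [fourier_comp_mul_const f hh.ne', abs_of_pos (inv_pos.2 hh), Complex.real_smul,
      Complex.ofReal_inv, div_eq_mul_inv]
  have hpoisson := Real.tsum_eq_tsum_fourier_of_rpow_decay (f := fun u ↦ f (u * h))
    (by fun_prop) hb (isBigO_cocompact_rpow_comp_mul_const hh.ne' hf)
    (hfourier ▸ (isBigO_cocompact_rpow_comp_mul_const (inv_ne_zero hh.ne') hFf).const_mul_left _) 0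
  simp only [zero_add, hfourier, QuotientAddGroup.mk_zero, fourier_eval_zero, mul_one,
    tsum_mul_left] at hpoisson
  rw [hpoisson, mul_inv_cancel_left₀ (by exact_mod_cast hh.ne')]
  simp only [div_eq_mul_inv]

end Poisson

lemma norm_Gamma_le_Gamma_re {s : ℂ} (hs : 0 < s.re) : ‖Complex.Gamma s‖ ≤ Gamma s.re := by
  rw [Complex.Gamma_eq_integral hs, Real.Gamma_eq_integral hs, Complex.GammaIntegral]
  refine (norm_integral_le_integral_norm _).trans_eq
    (setIntegral_congr_fun measurableSet_Ioi fun t ht ↦ ?_)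
  simp [Complex.norm_cpow_eq_rpow_re_of_pos ht, Complex.norm_exp]

lemma norm_Gamma_le_div_im_sq {s : ℂ} (hs : 0 < s.re) (him : s.im ≠ 0) :
    ‖Complex.Gamma s‖ ≤ Gamma (s.re + 2) / s.im ^ 2 := by
  have hs₀ : s ≠ 0 := by rintro rfl; simp at him
  have hs₁ : s + 1 ≠ 0 := by intro h0; apply him; simpa using congrArg Complex.im h0
  have hrec : Complex.Gamma (s + 2) = (s + 1) * (s * Complex.Gamma s) := by
    rw [← Complex.Gamma_add_one s hs₀, ← Complex.Gamma_add_one _ hs₁, add_assoc, one_add_one_eq_two]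
  have him₀ : |s.im| ≤ ‖s‖ := Complex.abs_im_le_norm s
  have him₁ : |s.im| ≤ ‖s + 1‖ := by simpa using Complex.abs_im_le_norm (s + 1)
  rw [le_div_iff₀' (by positivity)]
  calc s.im ^ 2 * ‖Complex.Gamma s‖ = |s.im| * (|s.im| * ‖Complex.Gamma s‖) := by
        rw [← sq_abs]; ring
    _ ≤ ‖s + 1‖ * (‖s‖ * ‖Complex.Gamma s‖) := by gcongr
    _ = ‖Complex.Gamma (s + 2)‖ := by rw [hrec, norm_mul, norm_mul]
    _ ≤ Gamma (s.re + 2) := by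
        simpa using norm_Gamma_le_Gamma_re (s := s + 2) (by simpa using by linarith)

lemma norm_Gamma_one_add_mul_I_sq {y : ℝ} (hy : y ≠ 0) :
    ‖Complex.Gamma (1 + y * Complex.I)‖ ^ 2 = π * y / sinh (π * y) := by
  have hyI : (y * Complex.I : ℂ) ≠ 0 := by simpa using hy
  have hconj : (starRingEnd ℂ) (1 + y * Complex.I) = 1 - y * Complex.I := by
    simp [sub_eq_add_neg]
  have hreflect : (‖Complex.Gamma (1 + y * Complex.I)‖ ^ 2 : ℂ) = π * y / Complex.sinh (π * y) :=
    calc (‖Complex.Gamma (1 + y * Complex.I)‖ ^ 2 : ℂ)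
        = Complex.Gamma (1 + y * Complex.I) * Complex.Gamma (1 - y * Complex.I) := by
          rw [← Complex.mul_conj', ← Complex.Gamma_conj, hconj]
      _ = y * Complex.I * (π / Complex.sin (π * (y * Complex.I))) := by
          rw [add_comm, Complex.Gamma_add_one _ hyI, mul_assoc, Complex.Gamma_mul_Gamma_one_sub]
      _ = π * y / Complex.sinh (π * y) := by
          rw [← mul_assoc, Complex.sin_mul_I]
          field_simp
  exact_mod_cast hreflect

lemma exp_neg_two_le_one_div_four : exp (-2) ≤ 1 / 4 := by
  rw [exp_neg, one_div]
  gcongr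
  linarith [exp_one_mul_le_exp (x := 2), exp_one_gt_d9]

lemma exp_div_four_le_sinh {t : ℝ} (ht : 1 ≤ t) : exp t / 4 ≤ sinh t := by
  have hneg : exp (-t) ≤ 1 := exp_le_one_iff.2 (by linarith)
  have hpos : t + 1 ≤ exp t := add_one_le_exp t
  rw [sinh_eq]
  linarith

lemma norm_Gamma_one_add_mul_I_le_exp_of_one_le {y : ℝ} (hy : 1 ≤ y) :
    ‖Complex.Gamma (1 + y * Complex.I)‖ ≤ 3 * exp (-y) := by
  have hsinh : exp (3 * y) / 4 ≤ sinh (π * y) :=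
    (exp_div_four_le_sinh (by linarith)).trans
      (sinh_le_sinh.2 (mul_le_mul_of_nonneg_right pi_gt_three.le (by linarith)))
  have hlin : 2 * y ≤ exp y := by
    nlinarith [exp_one_mul_le_exp (x := y), exp_one_gt_d9]
  refine (sq_le_sq₀ (norm_nonneg _) (by positivity)).1 ?_
  rw [norm_Gamma_one_add_mul_I_sq (by linarith), div_le_iff₀ (lt_of_lt_of_le (by positivity) hsinh)]
  calc π * y ≤ 4 * y := by gcongr; exact pi_le_four
    _ ≤ 9 / 4 * exp y := by linarith
    _ = (3 * exp (-y)) ^ 2 * (exp (3 * y) / 4) := by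
        rw [show exp y = exp (-y) ^ 2 * exp (3 * y) by
          rw [← exp_nat_mul, ← exp_add]; congr 1; push_cast; ring]
        ring
    _ ≤ (3 * exp (-y)) ^ 2 * sinh (π * y) := by gcongr

lemma norm_Gamma_one_add_mul_I_le_exp {y : ℝ} (hy : 1 ≤ |y|) :
    ‖Complex.Gamma (1 + y * Complex.I)‖ ≤ 3 * exp (-|y|) := by
  rcases abs_choice y with hpos | hneg
  · rw [hpos] at hy ⊢
    exact norm_Gamma_one_add_mul_I_le_exp_of_one_le hy
  · rw [hneg] at hy ⊢
    have hconj : (starRingEnd ℂ) (1 + y * Complex.I) = 1 + (-y : ℝ) * Complex.I := by simp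
    rw [← Complex.norm_conj, ← Complex.Gamma_conj, hconj]
    exact norm_Gamma_one_add_mul_I_le_exp_of_one_le hy

lemma norm_Gamma_one_sub_int_mul_I_le {y : ℝ} (hy : 1 ≤ y) {k : ℤ} (hk : k ≠ 0) :
    ‖Complex.Gamma ((1 : ℝ) - (k * y : ℝ) * Complex.I)‖ ≤ 3 * exp (-y) ^ k.natAbs := by
  have habs : |-(k * y)| = k.natAbs * y := by
    rw [abs_neg, abs_mul, abs_of_pos (by linarith : 0 < y), Nat.cast_natAbs, Int.cast_abs]
  have hk₁ : (1 : ℝ) ≤ k.natAbs := by exact_mod_cast Int.natAbs_pos.2 hk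
  have hbound := norm_Gamma_one_add_mul_I_le_exp (habs.symm ▸ one_le_mul_of_one_le_of_one_le hk₁ hy)
  rwa [habs, ← mul_neg (k.natAbs : ℝ), exp_nat_mul, Complex.ofReal_neg, neg_mul, ← sub_eq_add_neg,
    ← Complex.ofReal_one] at hbound

/-- The integrand of `∫ u, e ^ (a u) e ^ (-x e ^ u) = Γ(a) x ^ (-a)`, which is Euler's integral for
`Γ(a)` after the substitution `t = x e ^ u`. -/
noncomputable def gammaIntegrand (a x u : ℝ) : ℝ :=
  exp (a * u) * exp (-x * exp u)

section GammaIntegrand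

variable {a x : ℝ}

lemma continuous_gammaIntegrand : Continuous (gammaIntegrand a x) := by
  unfold gammaIntegrand
  fun_prop

lemma gammaIntegrand_isBigO_atBot (hx : 0 ≤ x) :
    gammaIntegrand a x =O[atBot] fun u ↦ exp (-a * |u|) := by
  refine IsBigO.of_bound' ?_
  filter_upwards [eventually_le_atBot 0] with u hu
  rw [gammaIntegrand, norm_mul, abs_of_nonpos hu, neg_mul_neg]
  refine mul_le_of_le_one_right (norm_nonneg _) ?_
  rw [Real.norm_eq_abs, abs_exp, exp_le_one_iff, neg_mul]
  exact neg_nonpos.2 (by positivity)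

lemma gammaIntegrand_isBigO_atTop (hx : 0 < x) :
    gammaIntegrand a x =O[atTop] fun u ↦ exp (-a * |u|) := by
  have hexp : (fun u ↦ exp (-x * exp u)) =O[atTop] fun u ↦ exp u ^ (-2 * a) :=
    (isLittleO_exp_neg_mul_rpow_atTop hx _).isBigO.comp_tendsto tendsto_exp_atTop
  refine ((isBigO_refl (fun u ↦ exp (a * u)) atTop).mul hexp).trans_eventuallyEq ?_
  filter_upwards [eventually_ge_atTop 0] with u hu
  rw [← exp_mul, ← exp_add, abs_of_nonneg hu]
  ring_nf

lemma gammaIntegrand_isBigO_cocompact_rpow (ha : 0 < a) (hx : 0 < x) (b : ℝ) :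
    gammaIntegrand a x =O[cocompact ℝ] fun u ↦ |u| ^ b := by
  have hexp : gammaIntegrand a x =O[cocompact ℝ] fun u ↦ exp (-a * |u|) := by
    rw [cocompact_eq_atBot_atTop]
    exact (gammaIntegrand_isBigO_atBot hx.le).sup (gammaIntegrand_isBigO_atTop hx)
  exact hexp.trans
    ((isLittleO_exp_neg_mul_rpow_atTop ha b).isBigO.comp_tendsto tendsto_norm_cocompact_atTop)

lemma fourier_gammaIntegrand (ha : 0 < a) (hx : 0 < x) (ξ : ℝ) :
    𝓕 (fun u ↦ (gammaIntegrand a x u : ℂ)) ξ =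
      (x⁻¹ : ℂ) ^ (a - (2 * π * ξ : ℝ) * Complex.I) *
        Complex.Gamma (a - (2 * π * ξ : ℝ) * Complex.I) := by
  set s : ℂ := a - (2 * π * ξ : ℝ) * Complex.I with hs
  have hre : s.re = a := by simp [hs]
  have him : (-s).im / (2 * π) = ξ := by simp [hs]
  have hsubst : (fun u ↦ (gammaIntegrand a x u : ℂ)) = fun u ↦
      exp (-(-s).re * u) • Complex.exp (-(x * ((exp (-u))⁻¹ : ℝ))) := by
    ext u
    simp [gammaIntegrand, hre, exp_neg, Complex.exp_neg]
  calc 𝓕 (fun u ↦ (gammaIntegrand a x u : ℂ)) ξ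
      = mellin (fun t : ℝ ↦ Complex.exp (-(x * (t⁻¹ : ℝ)))) (-s) := by
        rw [mellin_eq_fourier, him, hsubst]
    _ = mellin (fun t : ℝ ↦ Complex.exp (-(x * t))) s := by
        rw [mellin_comp_inv (fun t : ℝ ↦ Complex.exp (-(x * t))), neg_neg]
    _ = (x⁻¹ : ℂ) ^ s * Complex.Gamma s := by
        simpa only [mellin, smul_eq_mul, one_div] using
          Complex.integral_cpow_mul_exp_neg_mul_Ioi (hre.symm ▸ ha) hx

lemma norm_inv_ofReal_cpow_sub_mul_I (hx : 0 < x) (a y : ℝ) :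
    ‖(x⁻¹ : ℂ) ^ (a - y * Complex.I)‖ = x⁻¹ ^ a := by
  rw [← Complex.ofReal_inv, Complex.norm_cpow_eq_rpow_re_of_pos (inv_pos.2 hx)]
  simp

lemma fourier_gammaIntegrand_isBigO (ha : 0 < a) (hx : 0 < x) :
    𝓕 (fun u ↦ (gammaIntegrand a x u : ℂ)) =O[cocompact ℝ] fun ξ ↦ |ξ| ^ (-2 : ℝ) := by
  refine IsBigO.of_bound (x⁻¹ ^ a * (Gamma (a + 2) / (2 * π) ^ 2)) ?_
  filter_upwards [(isCompact_singleton (x := (0 : ℝ))).compl_mem_cocompact] with ξ hξ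
  have hre : (a - (2 * π * ξ : ℝ) * Complex.I : ℂ).re = a := by simp
  have him : (a - (2 * π * ξ : ℝ) * Complex.I : ℂ).im = -(2 * π * ξ) := by simp
  have hdecay := norm_Gamma_le_div_im_sq (s := a - (2 * π * ξ : ℝ) * Complex.I) (hre.symm ▸ ha)
    (him ▸ neg_ne_zero.2 (mul_ne_zero two_pi_pos.ne' hξ))
  rw [hre, him] at hdecay
  rw [fourier_gammaIntegrand ha hx, norm_mul, norm_inv_ofReal_cpow_sub_mul_I hx,
    mul_assoc (x⁻¹ ^ a)]
  refine mul_le_mul_of_nonneg_left (hdecay.trans_eq ?_) (by positivity)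
  rw [Real.norm_eq_abs, abs_of_nonneg (by positivity), rpow_neg (abs_nonneg ξ), rpow_two, sq_abs]
  field

lemma mul_tsum_gammaIntegrand_eq_tsum_Gamma (ha : 0 < a) (hx : 0 < x) {h : ℝ} (hh : 0 < h) :
    (h * ∑' j : ℤ, gammaIntegrand a x (j * h) : ℝ) =
      ∑' k : ℤ, (x⁻¹ : ℂ) ^ (a - (2 * π * (k / h) : ℝ) * Complex.I) *
        Complex.Gamma (a - (2 * π * (k / h) : ℝ) * Complex.I) := by
  rw [Complex.ofReal_mul, Complex.ofReal_tsum, mul_tsum_eq_tsum_fourier_of_rpow_decay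
    (f := fun u ↦ (gammaIntegrand a x u : ℂ))
    (Complex.continuous_ofReal.comp continuous_gammaIntegrand) one_lt_two
    (Complex.isBigO_ofReal_left.2 (gammaIntegrand_isBigO_cocompact_rpow ha hx _))
    (fourier_gammaIntegrand_isBigO ha hx) hh]
  simp only [fourier_gammaIntegrand ha hx]

lemma abs_Gamma_mul_inv_rpow_sub_mul_tsum_gammaIntegrand_le (ha : 0 < a) (hx : 0 < x) {h : ℝ}
    (hh : 0 < h) {C r : ℝ} (hr₀ : 0 ≤ r) (hr₁ : r < 1) (hΓ : ∀ k : ℤ, k ≠ 0 →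
      ‖Complex.Gamma (a - (2 * π * (k / h) : ℝ) * Complex.I)‖ ≤ C * r ^ k.natAbs) :
    |Gamma a * x⁻¹ ^ a - h * ∑' j : ℤ, gammaIntegrand a x (j * h)| ≤
      2 * (C * (r / (1 - r))) * x⁻¹ ^ a := by
  set G : ℤ → ℂ := fun k ↦ (x⁻¹ : ℂ) ^ (a - (2 * π * (k / h) : ℝ) * Complex.I) *
    Complex.Gamma (a - (2 * π * (k / h) : ℝ) * Complex.I) with hG
  have hG₀ : ((Gamma a * x⁻¹ ^ a : ℝ) : ℂ) = G 0 := by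
    simp [hG, Complex.ofReal_cpow (inv_nonneg.2 hx.le), Complex.Gamma_ofReal, mul_comm]
  rw [abs_sub_comm, ← Real.norm_eq_abs, ← Complex.norm_real, Complex.ofReal_sub,
    mul_tsum_gammaIntegrand_eq_tsum_Gamma ha hx hh, hG₀]
  refine (norm_tsum_int_sub_apply_zero_le_of_geometric (C := C * x⁻¹ ^ a) hr₀ hr₁
    fun k hk ↦ ?_).trans_eq (by ring)
  rw [norm_mul, norm_inv_ofReal_cpow_sub_mul_I hx, mul_comm, mul_right_comm C]
  exact mul_le_mul_of_nonneg_right (hΓ k hk) (rpow_nonneg (inv_nonneg.2 hx.le) a)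

end GammaIntegrand

lemma abs_inv_sub_mul_tsum_exp_le {x h : ℝ} (hx : 0 < x) (hh : 0 < h) (hhπ : h ≤ π) :
    |x⁻¹ - h * ∑' j : ℤ, exp (j * h) * exp (-x * exp (j * h))| ≤
      8 * exp (-(2 * π / h)) * x⁻¹ := by
  set r := exp (-(2 * π / h))
  have hfreq : 2 ≤ 2 * π / h := by rw [le_div_iff₀ hh]; linarith
  have hr₀ : 0 < r := exp_pos _
  have hr₁ : r ≤ 1 / 4 := (exp_le_exp.2 (neg_le_neg hfreq)).trans exp_neg_two_le_one_div_four
  have hΓ (k : ℤ) (hk : k ≠ 0) :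
      ‖Complex.Gamma ((1 : ℝ) - (2 * π * (k / h) : ℝ) * Complex.I)‖ ≤ 3 * r ^ k.natAbs := by
    rw [show 2 * π * (k / h) = k * (2 * π / h) by ring]
    exact norm_Gamma_one_sub_int_mul_I_le (by linarith) hk
  have herror := abs_Gamma_mul_inv_rpow_sub_mul_tsum_gammaIntegrand_le one_pos hx hh
    hr₀.le (by linarith) hΓ
  simp only [gammaIntegrand, Gamma_one, rpow_one, one_mul] at herror
  have htail : r / (1 - r) ≤ 4 / 3 * r := by
    rw [div_le_iff₀ (by linarith)]
    nlinarith
  calc _ ≤ 2 * (3 * (r / (1 - r))) * x⁻¹ := herror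
    _ ≤ 2 * (3 * (4 / 3 * r)) * x⁻¹ := by gcongr
    _ = 8 * r * x⁻¹ := by ring

lemma abs_inv_sub_mul_tsum_exp_le_of_int (N : ℤ) {x h : ℝ} (hx : 0 < x)
    (hh : h = 2 * π / (exp 1 ^ 2 * (2 * (N : ℝ) + 1) ^ 2)) :
    |x⁻¹ - h * ∑' j : ℤ, exp (j * h) * exp (-x * exp (j * h))| ≤
      8 * exp (-(2 * (N : ℝ))) * x⁻¹ := by
  have hodd : (1 : ℝ) ≤ (2 * N + 1) ^ 2 := by
    exact_mod_cast (sq_pos_of_ne_zero (by lia) : 0 < (2 * N + 1) ^ 2)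
  have he : 2 ≤ exp 1 ^ 2 := by nlinarith [exp_one_gt_d9]
  have hfreq : 2 * (2 * (N : ℝ) + 1) ^ 2 ≤ 2 * π / h := by
    rw [hh, div_div_cancel₀ (by positivity)]
    gcongr
  have hhpos : 0 < h := by rw [hh]; positivity
  have hhπ : h ≤ π := by
    have htwo : 2 * h ≤ 2 * π := (le_div_iff₀ hhpos).1 (by linarith)
    linarith
  refine (abs_inv_sub_mul_tsum_exp_le hx hhpos hhπ).trans ?_
  gcongr
  nlinarith

lemma eight_mul_exp_neg_two_mul_le {ε t : ℝ} (hε : 0 < ε) (ht : log (24 / ε) / 2 ≤ t) :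
    8 * exp (-(2 * t)) ≤ ε / 3 := by
  have hexp : 24 / ε ≤ exp (2 * t) := (log_le_iff_le_exp (by positivity)).1 (by linarith)
  rw [exp_neg, ← div_eq_mul_inv, div_le_iff₀ (exp_pos _)]
  rw [div_le_iff₀ hε] at hexp
  linarith

theorem inverse_eq_infinite_sum_exponentials_general (ε : ℝ) (hε : 0 < ε)
    (N : ℤ) (hN : N = ⌈Real.log (24 / ε) / 2⌉)
    (h : ℝ) (hh : h = 2 * π / (Real.exp 1 ^ 2 * (2 * (N : ℝ) + 1) ^ 2))
    (x : ℝ) (hx : 0 < x) :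
    |x⁻¹ - h * ∑' j : ℤ, Real.exp (j * h) * Real.exp (-x * Real.exp (j * h))| ≤
      8 * Real.exp (-(2 * (N : ℝ))) * x⁻¹ ∧
    8 * Real.exp (-(2 * (N : ℝ))) * x⁻¹ ≤ ε / 3 * x⁻¹ := by
  have hceil : log (24 / ε) / 2 ≤ N := hN ▸ Int.le_ceil _
  refine ⟨abs_inv_sub_mul_tsum_exp_le_of_int N hx hh, ?_⟩
  gcongr
  exact eight_mul_exp_neg_two_mul_le hε hceil

/-- **Equation (7): approximation of `x⁻¹` by an infinite sum of exponentials.**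
With `N = ⌈(1/2) log (24/ε)⌉` and `h = 2π/(e²(2N+1)²)`, for every `x > 0`,
`|x⁻¹ - h ∑_{j ∈ ℤ} e^{jh} e^{-x e^{jh}}| ≤ 8 e^{-2N} x⁻¹ ≤ (ε/3) x⁻¹`. -/
theorem inverse_eq_infinite_sum_exponentials (ε : ℝ) (hε : ε ∈ Set.Ioc (0 : ℝ) 1)
    (N : ℤ) (hN : N = ⌈Real.log (24 / ε) / 2⌉)
    (h : ℝ) (hh : h = 2 * π / (Real.exp 1 ^ 2 * (2 * (N : ℝ) + 1) ^ 2))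
    (x : ℝ) (hx : 0 < x) :
    |x⁻¹ - h * ∑' j : ℤ, Real.exp (j * h) * Real.exp (-x * Real.exp (j * h))| ≤
      8 * Real.exp (-(2 * (N : ℝ))) * x⁻¹ ∧
    8 * Real.exp (-(2 * (N : ℝ))) * x⁻¹ ≤ ε / 3 * x⁻¹ :=
  inverse_eq_infinite_sum_exponentials_general ε hε.1 N hN h hh x hx
end

section
/- Let ε ∈ (0,1], h > 0, and set A := ⌊−(1/h)·log(3/ε)⌋. Then for every x ∈ (0,1], h·Σ_{j<A, j∈ℤ} e^{jh}·e^{−x·e^{jh}} ≤ x⁻¹·(1 − e^{−x·e^{Ah}}) ≤ (ε/3)·x⁻¹. -/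
open Real

/-!
The primitive `t ↦ x⁻¹ (1 - e^{-x e^t})` of the integrand `e^t e^{-x e^t}` vanishes at `-∞`, and it
is convex as long as `x e^t ≤ 1`, because `u e^{-u}` increases for `u ≤ 1`. There it lies above its
tangents, so `h` times the integrand at `jh` is at most the increment of the primitive over
`[jh, (j + 1)h]`; these increments telescope. The second bound is `1 - e^{-u} ≤ u`.
-/

theorem monotoneOn_mul_exp_neg : MonotoneOn (fun u : ℝ => u * exp (-u)) (Set.Iic 1) := by
  have hderiv (u : ℝ) : HasDerivAt (fun u : ℝ => u * exp (-u)) ((1 - u) * exp (-u)) u := by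
    refine ((hasDerivAt_id u).mul (hasDerivAt_neg u).exp).congr_deriv ?_
    simp only [id_eq]
    ring
  refine monotoneOn_of_deriv_nonneg (convex_Iic 1)
    (fun u _ => (hderiv u).continuousAt.continuousWithinAt)
    (fun u _ => (hderiv u).differentiableAt.differentiableWithinAt) fun u hu => ?_
  have hu_le : u ≤ 1 := Set.mem_Iic.1 (interior_subset hu)
  rw [(hderiv u).deriv]
  exact mul_nonneg (sub_nonneg.2 hu_le) (exp_pos _).le

theorem mul_exp_le_one_iff {x t : ℝ} (hx : 0 < x) : x * exp t ≤ 1 ↔ t ≤ -log x := by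
  rw [← log_inv, le_log_iff_exp_le (inv_pos.2 hx), ← mul_one x⁻¹, le_inv_mul_iff₀ hx]

/-- The enumeration `A - 1, A - 2, …` of the integers below `A`. -/
def natEquivIntLt (A : ℤ) : ℕ ≃ {j : ℤ // j < A} where
  toFun n := ⟨A - 1 - n, by omega⟩
  invFun j := (A - 1 - j.1).toNat
  left_inv n := by simp
  right_inv j := Subtype.ext (by have := j.2; dsimp only; omega)

section Telescoping

variable {f G : ℤ → ℝ} {A : ℤ}

theorem sum_range_natEquivIntLt_le_of_le_sub (hG : ∀ j ≤ A, 0 ≤ G j)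
    (hfG : ∀ j < A, f j ≤ G (j + 1) - G j) (n : ℕ) :
    ∑ i ∈ Finset.range n, f (natEquivIntLt A i) ≤ G A :=
  calc ∑ i ∈ Finset.range n, f (natEquivIntLt A i)
      ≤ ∑ i ∈ Finset.range n, (G (A - (i : ℕ)) - G (A - (i + 1 : ℕ))) := by
        refine Finset.sum_le_sum fun i _ => ?_
        have hlast : A - (i + 1 : ℕ) = natEquivIntLt A i := by
          simp only [natEquivIntLt, Equiv.coe_fn_mk]
          omega
        have hfirst : A - (i : ℕ) = natEquivIntLt A i + 1 := by omega
        rw [hfirst, hlast]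
        exact hfG _ (natEquivIntLt A i).2
    _ = G A - G (A - n) := by
        rw [Finset.sum_range_sub' (fun i : ℕ => G (A - i)), Nat.cast_zero, sub_zero]
    _ ≤ G A := sub_le_self _ (hG _ (by omega))

theorem summable_and_tsum_intLt_le_of_le_sub (hf : ∀ j < A, 0 ≤ f j) (hG : ∀ j ≤ A, 0 ≤ G j)
    (hfG : ∀ j < A, f j ≤ G (j + 1) - G j) :
    Summable (fun j : {j : ℤ // j < A} => f j) ∧ ∑' j : {j : ℤ // j < A}, f j ≤ G A := by
  have hf_nonneg (n : ℕ) : 0 ≤ f (natEquivIntLt A n) := hf _ (natEquivIntLt A n).2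
  have hsum_le := sum_range_natEquivIntLt_le_of_le_sub hG hfG
  refine ⟨(natEquivIntLt A).summable_iff.1 (summable_of_sum_range_le hf_nonneg hsum_le), ?_⟩
  rw [← (natEquivIntLt A).tsum_eq]
  exact Real.tsum_le_of_sum_range_le hf_nonneg hsum_le

end Telescoping

/-- The integral of `e^s e^{-x e^s}` over `s ≤ t` in closed form, for `x ≠ 0`. -/
noncomputable def lowerIntegral (x t : ℝ) : ℝ := x⁻¹ * (1 - exp (-x * exp t))

section LowerIntegral

variable {x : ℝ}

theorem lowerIntegral_nonneg (hx : 0 < x) (t : ℝ) : 0 ≤ lowerIntegral x t := by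
  have hexp_le : exp (-x * exp t) ≤ 1 :=
    exp_le_one_iff.2 (mul_nonpos_of_nonpos_of_nonneg (neg_nonpos.2 hx.le) (exp_pos t).le)
  exact mul_nonneg (inv_nonneg.2 hx.le) (sub_nonneg.2 hexp_le)

theorem lowerIntegral_le_exp (hx : 0 < x) (t : ℝ) : lowerIntegral x t ≤ exp t := by
  rw [lowerIntegral, inv_mul_le_iff₀ hx]
  linarith [add_one_le_exp (-x * exp t)]

theorem hasDerivAt_lowerIntegral (hx : x ≠ 0) (t : ℝ) :
    HasDerivAt (lowerIntegral x) (exp t * exp (-x * exp t)) t := by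
  refine (((((hasDerivAt_exp t).const_mul (-x)).exp).const_sub 1).const_mul x⁻¹).congr_deriv ?_
  field_simp

theorem convexOn_lowerIntegral (hx : 0 < x) :
    ConvexOn ℝ (Set.Iic (-log x)) (lowerIntegral x) := by
  have hderiv := hasDerivAt_lowerIntegral hx.ne'
  refine MonotoneOn.convexOn_of_deriv (convex_Iic _)
    (fun t _ => (hderiv t).continuousAt.continuousWithinAt)
    (fun t _ => (hderiv t).differentiableAt.differentiableWithinAt) fun s hs t ht hst => ?_
  have hmono : x * exp s * exp (-(x * exp s)) ≤ x * exp t * exp (-(x * exp t)) :=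
    monotoneOn_mul_exp_neg ((mul_exp_le_one_iff hx).2 (interior_subset (s := Set.Iic _) hs))
      ((mul_exp_le_one_iff hx).2 (interior_subset (s := Set.Iic _) ht))
      (mul_le_mul_of_nonneg_left (exp_le_exp.2 hst) hx.le)
  rw [(hderiv s).deriv, (hderiv t).deriv]
  simpa only [mul_assoc, mul_le_mul_iff_right₀ hx, neg_mul] using hmono

theorem mul_le_lowerIntegral_sub {h t : ℝ} (hx : 0 < x) (hh : 0 < h)
    (hxt : x * exp (t + h) ≤ 1) :
    h * (exp t * exp (-x * exp t)) ≤ lowerIntegral x (t + h) - lowerIntegral x t := by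
  have hth : t + h ≤ -log x := (mul_exp_le_one_iff hx).1 hxt
  have hslope := (convexOn_lowerIntegral hx).le_slope_of_hasDerivAt
    (Set.mem_Iic.2 (by linarith)) hth (lt_add_of_pos_right t hh)
    (hasDerivAt_lowerIntegral hx.ne' t)
  rwa [slope_def_field, add_sub_cancel_left, le_div_iff₀' hh] at hslope

theorem summable_and_mul_tsum_le_lowerIntegral {h : ℝ} {A : ℤ} (hx : 0 < x) (hh : 0 < h)
    (hxA : x * exp (A * h) ≤ 1) :
    Summable (fun j : {j : ℤ // j < A} => exp ((j : ℤ) * h) * exp (-x * exp ((j : ℤ) * h))) ∧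
    h * ∑' j : {j : ℤ // j < A}, exp ((j : ℤ) * h) * exp (-x * exp ((j : ℤ) * h)) ≤
      lowerIntegral x (A * h) := by
  have hstep (j : ℤ) (hj : j < A) : h * (exp (j * h) * exp (-x * exp (j * h))) ≤
      lowerIntegral x ((j + 1 : ℤ) * h) - lowerIntegral x (j * h) := by
    have hjA : ((j + 1 : ℤ) : ℝ) ≤ A := Int.cast_le.2 hj
    have hxj : x * exp ((j + 1 : ℤ) * h) ≤ 1 := le_trans (by gcongr) hxA
    have hsucc : ((j + 1 : ℤ) : ℝ) * h = j * h + h := by push_cast; ring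
    rw [hsucc] at hxj ⊢
    exact mul_le_lowerIntegral_sub hx hh hxj
  rw [← summable_mul_left_iff hh.ne', ← tsum_mul_left]
  exact summable_and_tsum_intLt_le_of_le_sub
    (f := fun j => h * (exp (j * h) * exp (-x * exp (j * h))))
    (G := fun j => lowerIntegral x (j * h))
    (fun _ _ => by positivity) (fun _ _ => lowerIntegral_nonneg hx _) hstep

end LowerIntegral

theorem exp_mul_le_div_of_le_floor {c ε h : ℝ} {A : ℤ} (hc : 0 < c) (hε : 0 < ε) (hh : 0 < h)
    (hA : A ≤ ⌊-(1 / h) * log (c / ε)⌋) : exp (A * h) ≤ ε / c := by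
  rw [← le_log_iff_exp_le (div_pos hε hc)]
  calc A * h ≤ -(1 / h) * log (c / ε) * h := mul_le_mul_of_nonneg_right (Int.le_floor.1 hA) hh.le
    _ = log (ε / c) := by
      rw [← inv_div ε c, log_inv]
      field_simp

/-- **Equation (8): bounding the lower tail.** With `A = ⌊-(1/h) log (3/ε)⌋`, for every
`x ∈ (0,1]`,
`h ∑_{j < A} e^{jh} e^{-x e^{jh}} ≤ x⁻¹ (1 - e^{-x e^{Ah}}) ≤ (ε/3) x⁻¹`
(and the tail sum converges). -/
theorem lower_tail_bound (ε : ℝ) (hε : ε ∈ Set.Ioc (0 : ℝ) 1) (h : ℝ) (hh : 0 < h)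
    (A : ℤ) (hA : A = ⌊-(1 / h) * Real.log (3 / ε)⌋)
    (x : ℝ) (hx : x ∈ Set.Ioc (0 : ℝ) 1) :
    Summable (fun j : {j : ℤ // j < A} =>
      Real.exp ((j : ℤ) * h) * Real.exp (-x * Real.exp ((j : ℤ) * h))) ∧
    h * ∑' j : {j : ℤ // j < A},
        Real.exp ((j : ℤ) * h) * Real.exp (-x * Real.exp ((j : ℤ) * h)) ≤
      x⁻¹ * (1 - Real.exp (-x * Real.exp (A * h))) ∧
    x⁻¹ * (1 - Real.exp (-x * Real.exp (A * h))) ≤ ε / 3 * x⁻¹ := by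
  obtain ⟨hε_pos, hε_le⟩ := hε
  obtain ⟨hx_pos, hx_le⟩ := hx
  have hexpA : exp (A * h) ≤ ε / 3 := exp_mul_le_div_of_le_floor three_pos hε_pos hh hA.le
  have hxA : x * exp (A * h) ≤ 1 :=
    mul_le_one₀ hx_le (exp_pos _).le (by linarith)
  obtain ⟨hsummable, htsum_le⟩ := summable_and_mul_tsum_le_lowerIntegral hx_pos hh hxA
  refine ⟨hsummable, htsum_le, ?_⟩
  calc lowerIntegral x (A * h) ≤ exp (A * h) := lowerIntegral_le_exp hx_pos _
    _ ≤ ε / 3 := hexpA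
    _ ≤ ε / 3 * x⁻¹ := le_mul_of_one_le_right (by positivity) ((one_le_inv₀ hx_pos).2 hx_le)
end

section
/- Let ε ∈ (0,1], δ ∈ (0,1], h > 0, and set B := ⌈(1/h)·log((1/δ)·log(3/ε))⌉. Then for every x ∈ [δ,1], h·Σ_{j>B, j∈ℤ} e^{jh}·e^{−x·e^{jh}} ≤ x⁻¹·e^{−x·e^{Bh}} ≤ (ε/3)·x⁻¹. -/
open Real

/-!
The function `s ↦ e^s e^{-x e^s}` has antiderivative `-x⁻¹ e^{-x e^s}` and decreases once
`x e^s ≥ 1`. The sum over `j > B` is a right Riemann sum of it with step `h`, so it is at most the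
integral over `(Bh, ∞)`, which is `x⁻¹ e^{-x e^{Bh}}`. The choice of `B` makes
`x e^{Bh} ≥ log (3/ε)`; this yields the bound `ε/3` on the exponential and, as `log (3/ε) ≥ 1`,
also places the whole sum in the decreasing range.
-/

open Set Filter MeasureTheory Topology

section AffineChangeOfVariables

variable {E : Type*} [NormedAddCommGroup E] {h : ℝ}

theorem integrableOn_Ioi_zero_comp_add_mul_iff (f : ℝ → E) (a : ℝ) (hh : 0 < h) :
    IntegrableOn (fun t ↦ f (a + t * h)) (Ioi 0) ↔ IntegrableOn f (Ioi a) := by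
  rw [integrableOn_Ioi_comp_mul_right_iff (fun s ↦ f (a + s)) 0 hh, zero_mul,
    ← (measurePreserving_add_left volume a).integrableOn_comp_preimage
      (measurableEmbedding_addLeft a) (f := f), preimage_const_add_Ioi, sub_self, Function.comp_def]

theorem integral_Ioi_zero_comp_add_mul [NormedSpace ℝ E] (f : ℝ → E) (a : ℝ) (hh : 0 < h) :
    ∫ t in Ioi 0, f (a + t * h) = h⁻¹ • ∫ s in Ioi a, f s := by
  rw [integral_comp_mul_right_Ioi (fun s ↦ f (a + s)) 0 hh, zero_mul,
    ← (measurePreserving_add_left volume a).setIntegral_preimage_emb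
      (measurableEmbedding_addLeft a) f, preimage_const_add_Ioi, sub_self]

end AffineChangeOfVariables

section RiemannSum

/-- The enumeration `n ↦ B + (n + 1)` of the integers above `B`, used to transfer facts on series
indexed by `ℕ` to sums over `j > B`. -/
def natEquivIntGt (B : ℤ) : ℕ ≃ {j : ℤ // B < j} where
  toFun n := ⟨B + (n + 1 : ℕ), by omega⟩
  invFun j := (j.1 - B - 1).toNat
  left_inv n := by simp only; omega
  right_inv j := Subtype.ext (by have := j.2; simp only; omega)

theorem natEquivIntGt_apply_mul (B : ℤ) (n : ℕ) (h : ℝ) :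
    ((natEquivIntGt B n : ℤ) : ℝ) * h = B * h + (n + 1 : ℕ) * h := by
  simp only [natEquivIntGt, Equiv.coe_fn_mk]
  push_cast
  ring

variable {f : ℝ → ℝ} {a h : ℝ} {B : ℤ}

theorem antitoneOn_comp_add_mul (hh : 0 ≤ h) (anti : AntitoneOn f (Ici a)) :
    AntitoneOn (fun t ↦ f (a + t * h)) (Ici 0) :=
  anti.comp_MonotoneOn (fun _ _ _ _ hst ↦ by gcongr)
    fun _ ht ↦ le_add_of_nonneg_right (mul_nonneg ht hh)

theorem summable_int_gt_of_integrableOn_Ioi (hh : 0 < h) (anti : AntitoneOn f (Ici (B * h)))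
    (integrable : IntegrableOn f (Ioi (B * h))) (nonneg : ∀ s ∈ Ioi (B * h), 0 ≤ f s) :
    Summable fun j : {j : ℤ // B < j} ↦ f ((j : ℤ) * h) := by
  have summable_nat : Summable fun n : ℕ ↦ f (B * h + n * h) :=
    (antitoneOn_comp_add_mul hh.le anti).summable_of_integrableOn_Ioi_zero
      ((integrableOn_Ioi_zero_comp_add_mul_iff f _ hh).2 integrable)
      fun _ ht ↦ nonneg _ (lt_add_of_pos_right _ (mul_pos ht hh))
  rw [← (natEquivIntGt B).summable_iff]
  simpa only [Function.comp_def, natEquivIntGt_apply_mul] using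
    (summable_nat_add_iff 1).2 summable_nat

theorem mul_tsum_int_gt_le_integral_Ioi (hh : 0 < h) (anti : AntitoneOn f (Ici (B * h)))
    (integrable : IntegrableOn f (Ioi (B * h))) (nonneg : ∀ s ∈ Ioi (B * h), 0 ≤ f s) :
    h * ∑' j : {j : ℤ // B < j}, f ((j : ℤ) * h) ≤ ∫ s in Ioi (B * h), f s := by
  have tsum_nat_le : ∑' n : ℕ, f (B * h + (n + 1 : ℕ) * h) ≤ ∫ t in Ioi 0, f (B * h + t * h) :=
    (antitoneOn_comp_add_mul hh.le anti).tsum_add_one_le_integral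
      ((integrableOn_Ioi_zero_comp_add_mul_iff f _ hh).2 integrable)
      fun _ ht ↦ nonneg _ (lt_add_of_pos_right _ (mul_pos ht hh))
  rwa [← (natEquivIntGt B).tsum_eq, tsum_congr fun n ↦ by rw [natEquivIntGt_apply_mul],
    ← le_inv_mul_iff₀ hh, ← smul_eq_mul h⁻¹, ← integral_Ioi_zero_comp_add_mul f _ hh]

end RiemannSum

section DoubleExponential

variable {x : ℝ}

theorem antitoneOn_mul_exp_neg_mul (hx : 0 < x) :
    AntitoneOn (fun y ↦ y * exp (-x * y)) (Ici x⁻¹) := by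
  intro y hy z _ hyz
  have one_le : 1 ≤ x * y := (inv_le_iff_one_le_mul₀' hx).1 hy
  have hy0 : 0 ≤ y := (inv_pos.2 hx).le.trans hy
  calc z * exp (-x * z) ≤ (y * (x * (z - y) + 1)) * exp (-x * z) := by
        gcongr
        linarith [mul_le_mul_of_nonneg_right one_le (sub_nonneg.2 hyz)]
    _ ≤ (y * exp (x * (z - y))) * exp (-x * z) := by
        gcongr
        exact add_one_le_exp _
    _ = y * exp (-x * y) := by
        rw [mul_assoc, ← exp_add]
        ring_nf

theorem antitoneOn_exp_mul_exp_neg_mul_exp {a : ℝ} (hx : 0 < x) (ha : 1 ≤ x * exp a) :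
    AntitoneOn (fun s ↦ exp s * exp (-x * exp s)) (Ici a) :=
  (antitoneOn_mul_exp_neg_mul hx).comp_MonotoneOn (exp_monotone.monotoneOn _)
    fun _ hs ↦ ((inv_le_iff_one_le_mul₀' hx).2 ha).trans (exp_le_exp.2 hs)

theorem hasDerivAt_neg_inv_mul_exp_neg_mul_exp (hx : x ≠ 0) (s : ℝ) :
    HasDerivAt (fun s ↦ -(x⁻¹ * exp (-x * exp s))) (exp s * exp (-x * exp s)) s := by
  convert! ((((hasDerivAt_exp s).const_mul (-x)).exp).const_mul x⁻¹).neg using 1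
  field_simp

theorem tendsto_neg_inv_mul_exp_neg_mul_exp_atTop (hx : 0 < x) :
    Tendsto (fun s ↦ -(x⁻¹ * exp (-x * exp s))) atTop (𝓝 0) := by
  have exponent_atBot : Tendsto (fun s ↦ -x * exp s) atTop atBot :=
    tendsto_exp_atTop.const_mul_atTop_of_neg (neg_neg_of_pos hx)
  simpa using ((tendsto_exp_atBot.comp exponent_atBot).const_mul x⁻¹).neg

theorem integrableOn_Ioi_exp_mul_exp_neg_mul_exp (hx : 0 < x) (a : ℝ) :
    IntegrableOn (fun s ↦ exp s * exp (-x * exp s)) (Ioi a) :=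
  integrableOn_Ioi_deriv_of_nonneg'
    (fun s _ ↦ hasDerivAt_neg_inv_mul_exp_neg_mul_exp hx.ne' s) (fun _ _ ↦ by positivity)
    (tendsto_neg_inv_mul_exp_neg_mul_exp_atTop hx)

theorem integral_Ioi_exp_mul_exp_neg_mul_exp (hx : 0 < x) (a : ℝ) :
    ∫ s in Ioi a, exp s * exp (-x * exp s) = x⁻¹ * exp (-x * exp a) := by
  rw [integral_Ioi_of_hasDerivAt_of_nonneg'
    (fun s _ ↦ hasDerivAt_neg_inv_mul_exp_neg_mul_exp hx.ne' s) (fun _ _ ↦ by positivity)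
    (tendsto_neg_inv_mul_exp_neg_mul_exp_atTop hx), zero_sub, neg_neg]

end DoubleExponential

theorem le_mul_exp_of_log_div_le {c δ x t : ℝ} (hc : 0 < c) (hδ : 0 < δ) (hx : δ ≤ x)
    (ht : log (c / δ) ≤ t) : c ≤ x * exp t :=
  calc c ≤ δ * exp t := (div_le_iff₀' hδ).1 ((log_le_iff_le_exp (div_pos hc hδ)).1 ht)
    _ ≤ x * exp t := by gcongr

theorem upper_tail_bound_general {ε δ h x : ℝ} {B : ℤ} (hε : ε ∈ Ioc 0 (3 / exp 1)) (hδ : 0 < δ)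
    (hh : 0 < h) (hB : 1 / h * log (1 / δ * log (3 / ε)) ≤ B) (hx : δ ≤ x) :
    Summable (fun j : {j : ℤ // B < j} ↦ exp ((j : ℤ) * h) * exp (-x * exp ((j : ℤ) * h))) ∧
    h * ∑' j : {j : ℤ // B < j}, exp ((j : ℤ) * h) * exp (-x * exp ((j : ℤ) * h)) ≤
      x⁻¹ * exp (-x * exp (B * h)) ∧
    x⁻¹ * exp (-x * exp (B * h)) ≤ ε / 3 * x⁻¹ := by
  have hx0 : 0 < x := hδ.trans_le hx
  have ratio_pos : 0 < 3 / ε := div_pos three_pos hε.1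
  have one_le_log : 1 ≤ log (3 / ε) :=
    (le_log_iff_exp_le ratio_pos).2 ((le_div_comm₀ hε.1 (exp_pos 1)).1 hε.2)
  rw [one_div_mul_eq_div, one_div_mul_eq_div, div_le_iff₀ hh] at hB
  have log_le : log (3 / ε) ≤ x * exp (B * h) :=
    le_mul_exp_of_log_div_le (one_pos.trans_le one_le_log) hδ hx hB
  have anti := antitoneOn_exp_mul_exp_neg_mul_exp hx0 (one_le_log.trans log_le)
  have integrable := integrableOn_Ioi_exp_mul_exp_neg_mul_exp hx0 (B * h)
  refine ⟨summable_int_gt_of_integrableOn_Ioi hh anti integrable fun _ _ ↦ by positivity, ?_, ?_⟩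
  · rw [← integral_Ioi_exp_mul_exp_neg_mul_exp hx0]
    exact mul_tsum_int_gt_le_integral_Ioi hh anti integrable fun _ _ ↦ by positivity
  · rw [mul_comm]
    gcongr
    calc exp (-x * exp (B * h)) ≤ exp (-log (3 / ε)) := exp_le_exp.2 (by linarith)
      _ = ε / 3 := by rw [exp_neg, exp_log ratio_pos, inv_div]

/-- **Equation (9): bounding the upper tail.** With `B = ⌈(1/h) log ((1/δ) log (3/ε))⌉`,
for every `x ∈ [δ,1]`,
`h ∑_{j > B} e^{jh} e^{-x e^{jh}} ≤ x⁻¹ e^{-x e^{Bh}} ≤ (ε/3) x⁻¹`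
(and the tail sum converges). -/
theorem upper_tail_bound (ε δ : ℝ) (hε : ε ∈ Set.Ioc (0 : ℝ) 1)
    (hδ : δ ∈ Set.Ioc (0 : ℝ) 1) (h : ℝ) (hh : 0 < h)
    (B : ℤ) (hB : B = ⌈(1 / h) * Real.log ((1 / δ) * Real.log (3 / ε))⌉)
    (x : ℝ) (hx : x ∈ Set.Icc δ 1) :
    Summable (fun j : {j : ℤ // B < j} =>
      Real.exp ((j : ℤ) * h) * Real.exp (-x * Real.exp ((j : ℤ) * h))) ∧
    h * ∑' j : {j : ℤ // B < j},
        Real.exp ((j : ℤ) * h) * Real.exp (-x * Real.exp ((j : ℤ) * h)) ≤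
      x⁻¹ * Real.exp (-x * Real.exp (B * h)) ∧
    x⁻¹ * Real.exp (-x * Real.exp (B * h)) ≤ ε / 3 * x⁻¹ := by
  have one_le : 1 ≤ 3 / exp 1 := (one_le_div (exp_pos 1)).2 exp_one_lt_three.le
  exact upper_tail_bound_general ⟨hε.1, hε.2.trans one_le⟩ hδ.1 hh (hB ▸ Int.le_ceil _) hx.1
end
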